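/- arXiv:2304.05896 — 3 statements merged into one kernel-verified Lean document; each statement's English description precedes it below -/
import Mathlib

section
/- There exist constants C > 0 and s₁ ≥ 1, depending only on d, T, ρ₀ and C₀, with the following property. For all s ≥ s₁, λ ≥ s₁ and all admissible functions u, v satisfying, for every (x,t) ∈ Q, the pointwise inequalities |∂_t u + Δu| ≤ C₀(|u| + |∇u| + |v|) and |∂_t v − Δv − ρ₀ Δu| ≤ C₀(|u| + |v| + |∇u| + |∇v|), one has ∫_Q { |∂_t u|² + |Δu|² + sλφ|∇u|² + s²λ²φ²|u|² + (1/(sφ))(|∂_t v|² + |Δv|²) + λ|∇v|² + sλ²φ|v|² } e^{2sφ} dx dt + ∫_{ℝ^d} (s²λ|u(x,0)|² + s|∇u(x,0)|²) e^{2s} dx + ∫_{ℝ^d} (sλ|v(x,0)|² e^{2s} + |∇v(x,T)|² e^{2sφ(T)}) dx ≤ C ∫_{ℝ^d} (sλφ(T)|v(x,T)|² e^{2sφ(T)} + |∇v(x,0)|² e^{2s}) dx + C ∫_{ℝ^d} (s²λ²φ(T)²|u(x,T)|² + sφ(T)|∇u(x,T)|²) e^{2sφ(T)} dx. -/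
open MeasureTheory Real Set

noncomputable section

/-- Spatial partial derivative of `f` in the `i`-th coordinate direction. -/
def spd {d : ℕ} (i : Fin d) (f : (Fin d → ℝ) → ℝ) (x : Fin d → ℝ) : ℝ :=
  fderiv ℝ f x (Pi.single i 1)

/-- Time derivative `∂_t u`. -/
def tder {d : ℕ} (u : (Fin d → ℝ) → ℝ → ℝ) (x : Fin d → ℝ) (t : ℝ) : ℝ :=
  deriv (u x) t

/-- Squared norm of the spatial gradient, `|∇u|²`. -/
def grad2 {d : ℕ} (u : (Fin d → ℝ) → ℝ → ℝ) (x : Fin d → ℝ) (t : ℝ) : ℝ :=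
  ∑ i : Fin d, (spd i (fun y => u y t) x) ^ 2

/-- Norm of the spatial gradient, `|∇u|`. -/
def gradNorm {d : ℕ} (u : (Fin d → ℝ) → ℝ → ℝ) (x : Fin d → ℝ) (t : ℝ) : ℝ :=
  Real.sqrt (grad2 u x t)

/-- Second spatial partial derivative `∂_i ∂_j u`. -/
def pdij {d : ℕ} (i j : Fin d) (u : (Fin d → ℝ) → ℝ → ℝ) (x : Fin d → ℝ) (t : ℝ) : ℝ :=
  spd i (fun y => spd j (fun z => u z t) y) x

/-- Spatial Laplacian `Δu`. -/
def lap {d : ℕ} (u : (Fin d → ℝ) → ℝ → ℝ) (x : Fin d → ℝ) (t : ℝ) : ℝ :=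
  ∑ i : Fin d, pdij i i u x t

/-- `Σ_{i,j=1}^d |∂_i∂_j u|²`. -/
def hess2 {d : ℕ} (u : (Fin d → ℝ) → ℝ → ℝ) (x : Fin d → ℝ) (t : ℝ) : ℝ :=
  ∑ i : Fin d, ∑ j : Fin d, (pdij i j u x t) ^ 2

/-- `u : ℝ^d × ℝ → ℝ` is admissible: `C^∞` and spatially compactly supported,
uniformly for `t ∈ [0,T]`. -/
def Admissible {d : ℕ} (T : ℝ) (u : (Fin d → ℝ) → ℝ → ℝ) : Prop :=
  ContDiff ℝ (⊤ : ℕ∞) (fun p : (Fin d → ℝ) × ℝ => u p.1 p.2) ∧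
  ∃ K₀ : Set (Fin d → ℝ), IsCompact K₀ ∧
    ∀ x t, x ∉ K₀ → t ∈ Set.Icc (0 : ℝ) T → u x t = 0

end

/-- Joint smoothness in space and time. -/
def Sm {d : ℕ} (u : (Fin d → ℝ) → ℝ → ℝ) : Prop :=
  ContDiff ℝ (⊤ : ℕ∞) (fun p : (Fin d → ℝ) × ℝ => u p.1 p.2)

/-- Vanishing off `K` for times in `S`. -/
def Van {d : ℕ} (K : Set (Fin d → ℝ)) (S : Set ℝ) (u : (Fin d → ℝ) → ℝ → ℝ) : Prop :=
  ∀ x t, x ∉ K → t ∈ S → u x t = 0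

/-- Spatial partial derivative as an operator on space-time functions. -/
noncomputable def sd {d : ℕ} (i : Fin d) (u : (Fin d → ℝ) → ℝ → ℝ) :
    (Fin d → ℝ) → ℝ → ℝ := fun x t => spd i (fun y => u y t) x

theorem sd_eq {d : ℕ} {u : (Fin d → ℝ) → ℝ → ℝ} (h : Sm u) (i : Fin d) (x : Fin d → ℝ) (t : ℝ) :
    sd i u x t = fderiv ℝ (fun p : (Fin d → ℝ) × ℝ => u p.1 p.2) (x, t) (Pi.single i 1, 0) := by
  have h1 : HasFDerivAt (fun p : (Fin d → ℝ) × ℝ => u p.1 p.2)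
      (fderiv ℝ (fun p : (Fin d → ℝ) × ℝ => u p.1 p.2) (x, t)) (x, t) :=
    (h.differentiable (by simp) _).hasFDerivAt
  have h2 := HasFDerivAt.comp (f := fun y : Fin d → ℝ => (y, t)) x h1
    ((hasFDerivAt_id x).prodMk (hasFDerivAt_const t x))
  have h3 := h2.fderiv
  unfold sd spd
  change fderiv ℝ ((fun p : (Fin d → ℝ) × ℝ => u p.1 p.2) ∘ fun y : Fin d → ℝ => (y, t)) x _ = _
  rw [h3]
  simp

theorem tder_hasDerivAt {d : ℕ} {u : (Fin d → ℝ) → ℝ → ℝ} (h : Sm u) (x : Fin d → ℝ) (t : ℝ) :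
    HasDerivAt (u x) (fderiv ℝ (fun p : (Fin d → ℝ) × ℝ => u p.1 p.2) (x, t) (0, 1)) t := by
  have h1 : HasFDerivAt (fun p : (Fin d → ℝ) × ℝ => u p.1 p.2)
      (fderiv ℝ (fun p : (Fin d → ℝ) × ℝ => u p.1 p.2) (x, t)) (x, t) :=
    (h.differentiable (by simp) _).hasFDerivAt
  exact HasFDerivAt.comp_hasDerivAt (f := fun s : ℝ => (x, s)) t h1
    ((hasDerivAt_const t x).prodMk (hasDerivAt_id t))

theorem tder_eq {d : ℕ} {u : (Fin d → ℝ) → ℝ → ℝ} (h : Sm u) (x : Fin d → ℝ) (t : ℝ) :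
    tder u x t = fderiv ℝ (fun p : (Fin d → ℝ) × ℝ => u p.1 p.2) (x, t) (0, 1) :=
  (tder_hasDerivAt h x t).deriv

theorem tder_hd {d : ℕ} {u : (Fin d → ℝ) → ℝ → ℝ} (h : Sm u) (x : Fin d → ℝ) (t : ℝ) :
    HasDerivAt (u x) (tder u x t) t := by
  rw [tder_eq h]; exact tder_hasDerivAt h x t

theorem sm_fderiv {d : ℕ} {u : (Fin d → ℝ) → ℝ → ℝ} (h : Sm u) (w : (Fin d → ℝ) × ℝ) :
    ContDiff ℝ (⊤ : ℕ∞) (fun p => fderiv ℝ (fun p : (Fin d → ℝ) × ℝ => u p.1 p.2) p w) :=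
  (h.fderiv_right (m := (⊤ : ℕ∞)) (by simp)).clm_apply contDiff_const

theorem sm_sd {d : ℕ} {u : (Fin d → ℝ) → ℝ → ℝ} (h : Sm u) (i : Fin d) : Sm (sd i u) := by
  unfold Sm
  simp only [sd_eq h]
  exact sm_fderiv h _

theorem sm_tder {d : ℕ} {u : (Fin d → ℝ) → ℝ → ℝ} (h : Sm u) : Sm (tder u) := by
  unfold Sm
  simp only [tder_eq h]
  exact sm_fderiv h _

theorem tder_sd {d : ℕ} {u : (Fin d → ℝ) → ℝ → ℝ} (h : Sm u) (i : Fin d) (x : Fin d → ℝ) (t : ℝ) :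
    tder (sd i u) x t = sd i (tder u) x t := by
  rw [tder_eq (sm_sd h i), sd_eq (sm_tder h)]
  simp only [sd_eq h, tder_eq h]
  have hs : IsSymmSndFDerivAt ℝ (fun p : (Fin d → ℝ) × ℝ => u p.1 p.2) (x, t) :=
    h.contDiffAt.isSymmSndFDerivAt (by simp; exact WithTop.coe_le_coe.2 (le_top : (2 : ℕ∞) ≤ ⊤))
  have hd : DifferentiableAt ℝ (fderiv ℝ (fun p : (Fin d → ℝ) × ℝ => u p.1 p.2)) (x, t) :=
    (h.fderiv_right (m := (⊤ : ℕ∞)) (by simp)).differentiable (by simp) _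
  have key : ∀ w z, fderiv ℝ (fun p => fderiv ℝ (fun p : (Fin d → ℝ) × ℝ => u p.1 p.2) p w) (x, t) z
      = fderiv ℝ (fderiv ℝ (fun p : (Fin d → ℝ) × ℝ => u p.1 p.2)) (x, t) z w := by
    intro w z
    rw [fderiv_clm_apply hd (differentiableAt_const w)]
    simp
  have := hs (0, 1) (Pi.single i 1, 0)
  rw [← key, ← key] at this
  exact this

theorem sm_slice {d : ℕ} {u : (Fin d → ℝ) → ℝ → ℝ} (h : Sm u) (t : ℝ) :
    ContDiff ℝ (⊤ : ℕ∞) (fun x => u x t) :=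
  ContDiff.comp (f := fun x : Fin d → ℝ => (x, t)) h (contDiff_id.prodMk contDiff_const)

theorem van_sd {d : ℕ} {u : (Fin d → ℝ) → ℝ → ℝ} {K : Set (Fin d → ℝ)} (hK : IsCompact K)
    {S : Set ℝ} (h : Van K S u) (i : Fin d) : Van K S (sd i u) := by
  intro x t hx ht
  have : (fun y => u y t) =ᶠ[nhds x] fun _ => 0 := by
    filter_upwards [hK.isClosed.isOpen_compl.mem_nhds hx] with y hy using h y t hy ht
  unfold sd spd
  rw [this.fderiv_eq]; simp

theorem van_tder {d : ℕ} {u : (Fin d → ℝ) → ℝ → ℝ} {K : Set (Fin d → ℝ)}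
    {S : Set ℝ} (hS : IsOpen S) (h : Van K S u) : Van K S (tder u) := by
  intro x t hx ht
  have : (u x) =ᶠ[nhds t] fun _ => 0 := by
    filter_upwards [hS.mem_nhds ht] with y hy using h x y hx hy
  unfold tder
  rw [this.deriv_eq]; simp

theorem van_hcs {d : ℕ} {u : (Fin d → ℝ) → ℝ → ℝ} {K : Set (Fin d → ℝ)} (hK : IsCompact K)
    {S : Set ℝ} (h : Van K S u) {t : ℝ} (ht : t ∈ S) : HasCompactSupport (fun x => u x t) :=
  HasCompactSupport.intro hK fun x hx => h x t hx ht

theorem int_mul {d : ℕ} {u v : (Fin d → ℝ) → ℝ → ℝ} {K : Set (Fin d → ℝ)} (hK : IsCompact K)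
    {S : Set ℝ} (hu : Sm u) (hv : Sm v) (h : Van K S u) {t : ℝ} (ht : t ∈ S) :
    Integrable (fun x => u x t * v x t) :=
  ((sm_slice hu t).continuous.mul (sm_slice hv t).continuous).integrable_of_hasCompactSupport
    ((van_hcs hK h ht).mul_right)

theorem ibp {d : ℕ} {u v : (Fin d → ℝ) → ℝ → ℝ} {K : Set (Fin d → ℝ)} (hK : IsCompact K)
    {S : Set ℝ} (hu : Sm u) (hv : Sm v) (h : Van K S u) {t : ℝ} (ht : t ∈ S) (i : Fin d) :
    ∫ x, u x t * sd i v x t = - ∫ x, sd i u x t * v x t := by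
  refine integral_mul_fderiv_eq_neg_fderiv_mul_of_integrable (f := fun x => u x t)
    (g := fun x => v x t) (v := Pi.single i 1) ?_ ?_ ?_ ?_ ?_
  · exact int_mul hK (sm_sd hu i) hv (van_sd hK h i) ht
  · exact int_mul hK hu (sm_sd hv i) h ht
  · exact int_mul hK hu hv h ht
  · intro x _; exact (sm_slice hu t).differentiable (by simp) x
  · intro x _; exact (sm_slice hv t).differentiable (by simp) x

theorem setint {d : ℕ} {u : (Fin d → ℝ) → ℝ → ℝ} {K : Set (Fin d → ℝ)}
    {S : Set ℝ} (h : Van K S u) {t : ℝ} (ht : t ∈ S) :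
    ∫ x in K, u x t = ∫ x, u x t :=
  setIntegral_eq_integral_of_forall_compl_eq_zero fun x hx => h x t hx ht

theorem cont_int {d : ℕ} {u : (Fin d → ℝ) → ℝ → ℝ} {K : Set (Fin d → ℝ)} (hK : IsCompact K)
    {S : Set ℝ} (hu : Sm u) (h : Van K S u) : ContinuousOn (fun t => ∫ x, u x t) S := by
  have hc : Continuous (fun t => ∫ x in K, u x t) :=
    continuous_parametric_integral_of_continuous (f := fun t x => u x t)
      (hu.continuous.comp continuous_swap) hK
  exact hc.continuousOn.congr fun t ht => (setint h ht).symm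

theorem deriv_int {d : ℕ} {u : (Fin d → ℝ) → ℝ → ℝ} {K : Set (Fin d → ℝ)} (hK : IsCompact K)
    {S : Set ℝ} (hS : IsOpen S) (hu : Sm u) (h : Van K S u) {t : ℝ} (ht : t ∈ S) :
    HasDerivAt (fun t => ∫ x, u x t) (∫ x, tder u x t) t := by
  have hS' := van_tder hS h
  rw [← setint hS' ht]
  have hc := (sm_tder hu).continuous
  obtain ⟨M, hM⟩ := (hK.prod (isCompact_Icc (a := t - 1) (b := t + 1))).bddAbove_image
    hc.norm.continuousOn
  have main := (hasDerivAt_integral_of_dominated_loc_of_deriv_le (μ := volume.restrict K)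
    (F := fun t x => u x t) (F' := fun t x => tder u x t) (x₀ := t) (s := Set.Icc (t-1) (t+1))
    (bound := fun _ => M) (Icc_mem_nhds (by linarith) (by linarith))
    (Filter.Eventually.of_forall fun s => (sm_slice hu s).continuous.aestronglyMeasurable)
    ((sm_slice hu t).continuous.continuousOn.integrableOn_compact hK)
    (sm_slice (sm_tder hu) t).continuous.aestronglyMeasurable
    (by
      filter_upwards [ae_restrict_mem hK.measurableSet] with x hx s hs
      exact hM ⟨(x, s), ⟨hx, hs⟩, rfl⟩)
    (by
      have : IsFiniteMeasure (volume.restrict K) := ⟨by simpa using hK.measure_lt_top⟩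
      exact integrable_const M)
    (Filter.Eventually.of_forall fun x s _ => tder_hd hu x s)).2
  refine main.congr_of_eventuallyEq ?_
  filter_upwards [hS.mem_nhds ht] with s hs using (setint h hs).symm

theorem lap_eq {d : ℕ} (u : (Fin d → ℝ) → ℝ → ℝ) :
    lap u = fun x t => ∑ i, sd i (sd i u) x t := rfl

theorem grad2_eq {d : ℕ} (u : (Fin d → ℝ) → ℝ → ℝ) :
    grad2 u = fun x t => ∑ i, (sd i u x t) ^ 2 := rfl

theorem sm_lap {d : ℕ} {u : (Fin d → ℝ) → ℝ → ℝ} (h : Sm u) : Sm (lap u) := by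
  rw [lap_eq]
  exact ContDiff.sum fun i _ => sm_sd (sm_sd h i) i

theorem van_lap {d : ℕ} {u : (Fin d → ℝ) → ℝ → ℝ} {K : Set (Fin d → ℝ)} (hK : IsCompact K)
    {S : Set ℝ} (h : Van K S u) : Van K S (lap u) := by
  intro x t hx ht
  rw [lap_eq]
  exact Finset.sum_eq_zero fun i _ => van_sd hK (van_sd hK h i) i x t hx ht

theorem sm_grad2 {d : ℕ} {u : (Fin d → ℝ) → ℝ → ℝ} (h : Sm u) : Sm (grad2 u) := by
  rw [grad2_eq]
  exact ContDiff.sum fun i _ => (sm_sd h i).pow 2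

theorem van_grad2 {d : ℕ} {u : (Fin d → ℝ) → ℝ → ℝ} {K : Set (Fin d → ℝ)} (hK : IsCompact K)
    {S : Set ℝ} (h : Van K S u) : Van K S (grad2 u) := by
  intro x t hx ht
  rw [grad2_eq]
  exact Finset.sum_eq_zero fun i _ => by simp [van_sd hK h i x t hx ht]

theorem sm_sq {d : ℕ} {u : (Fin d → ℝ) → ℝ → ℝ} (h : Sm u) : Sm (fun x t => (u x t) ^ 2) :=
  ContDiff.pow h 2

theorem van_sq {d : ℕ} {u : (Fin d → ℝ) → ℝ → ℝ} {K : Set (Fin d → ℝ)}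
    {S : Set ℝ} (h : Van K S u) : Van K S (fun x t => (u x t) ^ 2) := by
  intro x t hx ht
  simp [h x t hx ht]

theorem van_mono {d : ℕ} {u : (Fin d → ℝ) → ℝ → ℝ} {K : Set (Fin d → ℝ)}
    {S S' : Set ℝ} (h : Van K S u) (hS : S' ⊆ S) : Van K S' u :=
  fun x t hx ht => h x t hx (hS ht)

theorem int_one {d : ℕ} {u : (Fin d → ℝ) → ℝ → ℝ} {K : Set (Fin d → ℝ)} (hK : IsCompact K)
    {S : Set ℝ} (hu : Sm u) (h : Van K S u) {t : ℝ} (ht : t ∈ S) :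
    Integrable (fun x => u x t) :=
  (sm_slice hu t).continuous.integrable_of_hasCompactSupport (van_hcs hK h ht)

/-- `∫ |u|²`, at time `t`. -/
noncomputable def In {d : ℕ} (u : (Fin d → ℝ) → ℝ → ℝ) (t : ℝ) : ℝ := ∫ x, (u x t) ^ 2
/-- `∫ |∇u|²`, at time `t`. -/
noncomputable def Ig {d : ℕ} (u : (Fin d → ℝ) → ℝ → ℝ) (t : ℝ) : ℝ := ∫ x, grad2 u x t
/-- `∫ u ∂_t u`, at time `t`. -/
noncomputable def Ip {d : ℕ} (u : (Fin d → ℝ) → ℝ → ℝ) (t : ℝ) : ℝ := ∫ x, u x t * tder u x t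
/-- `∫ ∂_t u Δu`, at time `t`. -/
noncomputable def Ir {d : ℕ} (u : (Fin d → ℝ) → ℝ → ℝ) (t : ℝ) : ℝ := ∫ x, tder u x t * lap u x t

theorem cont_In {d : ℕ} {u : (Fin d → ℝ) → ℝ → ℝ} {K : Set (Fin d → ℝ)} (hK : IsCompact K)
    {S : Set ℝ} (hu : Sm u) (h : Van K S u) : ContinuousOn (In u) S :=
  cont_int hK (sm_sq hu) (van_sq h)

theorem cont_Ig {d : ℕ} {u : (Fin d → ℝ) → ℝ → ℝ} {K : Set (Fin d → ℝ)} (hK : IsCompact K)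
    {S : Set ℝ} (hu : Sm u) (h : Van K S u) : ContinuousOn (Ig u) S :=
  cont_int hK (sm_grad2 hu) (van_grad2 hK h)

theorem deriv_In {d : ℕ} {u : (Fin d → ℝ) → ℝ → ℝ} {K : Set (Fin d → ℝ)} (hK : IsCompact K)
    {S : Set ℝ} (hS : IsOpen S) (hu : Sm u) (h : Van K S u) {t : ℝ} (ht : t ∈ S) :
    HasDerivAt (In u) (2 * Ip u t) t := by
  have h1 := deriv_int hK hS (sm_sq hu) (van_sq h) ht
  have h2 : ∀ x, tder (fun x t => (u x t) ^ 2) x t = 2 * (u x t * tder u x t) := by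
    intro x
    have := ((tder_hd hu x t).pow 2).deriv
    unfold tder at this ⊢
    refine Eq.trans this ?_
    push_cast; ring
  simp only [h2] at h1
  rw [integral_const_mul] at h1
  exact h1

/-- Green's formula. -/
theorem green {d : ℕ} {u v : (Fin d → ℝ) → ℝ → ℝ} {K : Set (Fin d → ℝ)} (hK : IsCompact K)
    {S : Set ℝ} (hu : Sm u) (hv : Sm v) (h : Van K S u) {t : ℝ} (ht : t ∈ S) :
    ∫ x, u x t * lap v x t = - ∫ x, ∑ i, sd i u x t * sd i v x t := by
  simp only [lap_eq, Finset.mul_sum]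
  rw [integral_finsetSum, integral_finsetSum, ← Finset.sum_neg_distrib]
  · exact Finset.sum_congr rfl fun i _ => ibp hK hu (sm_sd hv i) h ht i
  · intro i _; exact int_mul hK (sm_sd hu i) (sm_sd hv i) (van_sd hK h i) ht
  · intro i _; exact int_mul hK hu (sm_sd (sm_sd hv i) i) h ht

theorem green_self {d : ℕ} {u : (Fin d → ℝ) → ℝ → ℝ} {K : Set (Fin d → ℝ)} (hK : IsCompact K)
    {S : Set ℝ} (hu : Sm u) (h : Van K S u) {t : ℝ} (ht : t ∈ S) :
    ∫ x, u x t * lap u x t = - Ig u t := by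
  rw [green hK hu hu h ht]
  simp only [Ig, grad2_eq, sq]

theorem deriv_Ig {d : ℕ} {u : (Fin d → ℝ) → ℝ → ℝ} {K : Set (Fin d → ℝ)} (hK : IsCompact K)
    {S : Set ℝ} (hS : IsOpen S) (hu : Sm u) (h : Van K S u) {t : ℝ} (ht : t ∈ S) :
    HasDerivAt (Ig u) (-2 * Ir u t) t := by
  have h1 := deriv_int hK hS (sm_grad2 hu) (van_grad2 hK h) ht
  have h2 : ∀ x, tder (grad2 u) x t = 2 * ∑ i, sd i (tder u) x t * sd i u x t := by
    intro x
    have := (HasDerivAt.fun_sum (u := Finset.univ) fun i _ =>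
      ((tder_hd (sm_sd hu i) x t).pow 2)).deriv
    unfold tder at this ⊢
    refine Eq.trans this ?_
    rw [Finset.mul_sum]
    refine Finset.sum_congr rfl fun i _ => ?_
    have := tder_sd hu i x t
    unfold tder at this
    rw [this]
    push_cast; ring
  simp only [h2] at h1
  rw [integral_const_mul] at h1
  have h3 := green hK (sm_tder hu) hu (van_tder hS h) ht
  convert! h1 using 1
  rw [Ir, h3]; ring

theorem quad {d : ℕ} {u : (Fin d → ℝ) → ℝ → ℝ} {K : Set (Fin d → ℝ)} (hK : IsCompact K)
    {S : Set ℝ} (hS : IsOpen S) (hu : Sm u) (h : Van K S u) {t : ℝ} (ht : t ∈ S) (a b c : ℝ) :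
    ∫ x, (a * u x t + b * tder u x t + c * lap u x t) ^ 2 =
      a ^ 2 * In u t + b ^ 2 * In (tder u) t + c ^ 2 * In (lap u) t + 2 * a * b * Ip u t
        - 2 * a * c * Ig u t + 2 * b * c * Ir u t := by
  have e : ∀ x, (a * u x t + b * tder u x t + c * lap u x t) ^ 2 =
      a ^ 2 * (u x t) ^ 2 + b ^ 2 * (tder u x t) ^ 2 + c ^ 2 * (lap u x t) ^ 2
      + 2 * a * b * (u x t * tder u x t) + 2 * a * c * (u x t * lap u x t)
      + 2 * b * c * (tder u x t * lap u x t) := fun x => by ring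
  simp only [e]
  have i1 := (int_one hK (sm_sq hu) (van_sq h) ht).const_mul (a ^ 2)
  have i2 := (int_one hK (sm_sq (sm_tder hu)) (van_sq (van_tder hS h)) ht).const_mul (b ^ 2)
  have i3 := (int_one hK (sm_sq (sm_lap hu)) (van_sq (van_lap hK h)) ht).const_mul (c ^ 2)
  have i4 := (int_mul hK hu (sm_tder hu) h ht).const_mul (2 * a * b)
  have i5 := (int_mul hK hu (sm_lap hu) h ht).const_mul (2 * a * c)
  have i6 := (int_mul hK (sm_tder hu) (sm_lap hu) (van_tder hS h) ht).const_mul (2 * b * c)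
  rw [integral_add ((((i1.fun_add i2).fun_add i3).fun_add i4).fun_add i5) i6,
    integral_add (((i1.fun_add i2).fun_add i3).fun_add i4) i5, integral_add ((i1.fun_add i2).fun_add i3) i4,
    integral_add (i1.fun_add i2) i3, integral_add i1 i2]
  simp only [integral_const_mul]
  rw [green_self hK hu h ht]
  unfold In Ip Ir
  ring

theorem quad_nonneg {d : ℕ} {u : (Fin d → ℝ) → ℝ → ℝ} {K : Set (Fin d → ℝ)} (hK : IsCompact K)
    {S : Set ℝ} (hS : IsOpen S) (hu : Sm u) (h : Van K S u) {t : ℝ} (ht : t ∈ S) (a b c : ℝ) :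
    0 ≤ a ^ 2 * In u t + b ^ 2 * In (tder u) t + c ^ 2 * In (lap u) t + 2 * a * b * Ip u t
        - 2 * a * c * Ig u t + 2 * b * c * Ir u t := by
  rw [← quad hK hS hu h ht a b c]
  exact integral_nonneg fun _ => sq_nonneg _

theorem In_nonneg {d : ℕ} (u : (Fin d → ℝ) → ℝ → ℝ) (t : ℝ) : 0 ≤ In u t :=
  integral_nonneg fun _ => sq_nonneg _

theorem grad2_nonneg {d : ℕ} (u : (Fin d → ℝ) → ℝ → ℝ) (x : Fin d → ℝ) (t : ℝ) : 0 ≤ grad2 u x t :=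
  Finset.sum_nonneg fun _ _ => sq_nonneg _

theorem Ig_nonneg {d : ℕ} (u : (Fin d → ℝ) → ℝ → ℝ) (t : ℝ) : 0 ≤ Ig u t :=
  integral_nonneg fun x => grad2_nonneg u x t

theorem bound_u {d : ℕ} {u v : (Fin d → ℝ) → ℝ → ℝ} {K K' : Set (Fin d → ℝ)} (hK : IsCompact K)
    (hK' : IsCompact K') {S : Set ℝ} (hS : IsOpen S) (hu : Sm u) (hv : Sm v) (h : Van K S u)
    (h' : Van K' S v) {t : ℝ} (ht : t ∈ S) (C₀ : ℝ)
    (hp : ∀ x, |tder u x t + lap u x t| ≤ C₀ * (|u x t| + gradNorm u x t + |v x t|)) :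
    In (tder u) t + 2 * Ir u t + In (lap u) t ≤ 3 * C₀ ^ 2 * (In u t + Ig u t + In v t) := by
  have e := quad hK hS hu h ht 0 1 1
  have i1 := (int_one hK (sm_sq hu) (van_sq h) ht)
  have i2 := (int_one hK (sm_grad2 hu) (van_grad2 hK h) ht)
  have i3 := (int_one hK' (sm_sq hv) (van_sq h') ht)
  have e2 : 3 * C₀ ^ 2 * (In u t + Ig u t + In v t) =
      ∫ x, 3 * C₀ ^ 2 * ((u x t) ^ 2 + grad2 u x t + (v x t) ^ 2) := by
    rw [integral_const_mul, integral_add (i1.fun_add i2) i3, integral_add i1 i2]; rfl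
  have e3 : In (tder u) t + 2 * Ir u t + In (lap u) t =
      ∫ x, (0 * u x t + 1 * tder u x t + 1 * lap u x t) ^ 2 := by rw [e]; ring
  rw [e2, e3]
  refine integral_mono_of_nonneg (Filter.Eventually.of_forall fun x => sq_nonneg _)
    (((i1.fun_add i2).fun_add i3).const_mul _) (Filter.Eventually.of_forall fun x => ?_)
  have hg : gradNorm u x t ^ 2 = grad2 u x t := Real.sq_sqrt (grad2_nonneg u x t)
  have := pow_le_pow_left₀ (abs_nonneg _) (hp x) 2
  rw [sq_abs] at this
  simp only [← hg]
  rw [← sq_abs (u x t), ← sq_abs (v x t)]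
  set a := |u x t|
  set b := |v x t|
  set g := gradNorm u x t
  have h3 : (a + g + b) ^ 2 ≤ 3 * (a ^ 2 + g ^ 2 + b ^ 2) := by
    nlinarith [sq_nonneg (a - g), sq_nonneg (a - b), sq_nonneg (g - b)]
  have := mul_le_mul_of_nonneg_left h3 (sq_nonneg C₀)
  nlinarith

theorem bound_v {d : ℕ} {u v : (Fin d → ℝ) → ℝ → ℝ} {K K' : Set (Fin d → ℝ)} (hK : IsCompact K)
    (hK' : IsCompact K') {S : Set ℝ} (hS : IsOpen S) (hu : Sm u) (hv : Sm v) (h : Van K S u)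
    (h' : Van K' S v) {t : ℝ} (ht : t ∈ S) (C₀ ρ₀ : ℝ)
    (hp : ∀ x, |tder v x t - lap v x t - ρ₀ * lap u x t| ≤
          C₀ * (|u x t| + |v x t| + gradNorm u x t + gradNorm v x t)) :
    In (tder v) t - 2 * Ir v t + In (lap v) t ≤
      (8 * C₀ ^ 2 + 2 * ρ₀ ^ 2) * (In (lap u) t + In u t + Ig u t + In v t + Ig v t) := by
  have e := quad hK' hS hv h' ht 0 1 (-1)
  have i0 := (int_one hK (sm_sq (sm_lap hu)) (van_sq (van_lap hK h)) ht)
  have i1 := (int_one hK (sm_sq hu) (van_sq h) ht)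
  have i2 := (int_one hK (sm_grad2 hu) (van_grad2 hK h) ht)
  have i3 := (int_one hK' (sm_sq hv) (van_sq h') ht)
  have i4 := (int_one hK' (sm_grad2 hv) (van_grad2 hK' h') ht)
  have e2 : (8 * C₀ ^ 2 + 2 * ρ₀ ^ 2) * (In (lap u) t + In u t + Ig u t + In v t + Ig v t) =
      ∫ x, (8 * C₀ ^ 2 + 2 * ρ₀ ^ 2) *
        ((lap u x t) ^ 2 + (u x t) ^ 2 + grad2 u x t + (v x t) ^ 2 + grad2 v x t) := by
    rw [integral_const_mul, integral_add (((i0.fun_add i1).fun_add i2).fun_add i3) i4,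
      integral_add ((i0.fun_add i1).fun_add i2) i3, integral_add (i0.fun_add i1) i2, integral_add i0 i1]; rfl
  have e3 : In (tder v) t - 2 * Ir v t + In (lap v) t =
      ∫ x, (0 * v x t + 1 * tder v x t + (-1) * lap v x t) ^ 2 := by rw [e]; ring
  rw [e2, e3]
  refine integral_mono_of_nonneg (Filter.Eventually.of_forall fun x => sq_nonneg _)
    (((((i0.fun_add i1).fun_add i2).fun_add i3).fun_add i4).const_mul _) (Filter.Eventually.of_forall fun x => ?_)
  have hg : gradNorm u x t ^ 2 = grad2 u x t := Real.sq_sqrt (grad2_nonneg u x t)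
  have hg' : gradNorm v x t ^ 2 = grad2 v x t := Real.sq_sqrt (grad2_nonneg v x t)
  have := pow_le_pow_left₀ (abs_nonneg _) (hp x) 2
  rw [sq_abs] at this
  simp only [← hg, ← hg']
  rw [← sq_abs (u x t), ← sq_abs (v x t)]
  set a := |u x t|
  set b := |v x t|
  set g := gradNorm u x t
  set k := gradNorm v x t
  set L := lap u x t
  set m := tder v x t - lap v x t - ρ₀ * L with hm
  have h0 : (0 * v x t + 1 * tder v x t + (-1) * lap v x t) = m + ρ₀ * L := by rw [hm]; ring
  rw [h0]
  have h3 : (a + b + g + k) ^ 2 ≤ 4 * (a ^ 2 + g ^ 2 + b ^ 2 + k ^ 2) := by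
    nlinarith [sq_nonneg (a - g), sq_nonneg (a - b), sq_nonneg (g - b), sq_nonneg (a - k),
      sq_nonneg (b - k), sq_nonneg (g - k)]
  have h4 := mul_le_mul_of_nonneg_left h3 (sq_nonneg C₀)
  have h5 : (m + ρ₀ * L) ^ 2 ≤ 2 * m ^ 2 + 2 * (ρ₀ ^ 2 * L ^ 2) := by
    nlinarith [sq_nonneg (m - ρ₀ * L)]
  have h6 : 0 ≤ ρ₀ ^ 2 * (a ^ 2 + g ^ 2 + b ^ 2 + k ^ 2) := by positivity
  have h7 : 0 ≤ C₀ ^ 2 * L ^ 2 := by positivity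
  rw [mul_pow] at this
  linarith

theorem alg_u {k lam N G A B P R : ℝ} (hk : 1 ≤ k) (hl : 1 ≤ lam) (hN : 0 ≤ N)
    (Q : ∀ x y z : ℝ, 0 ≤ x ^ 2 * N + y ^ 2 * A + z ^ 2 * B + 2 * x * y * P - 2 * x * z * G
      + 2 * y * z * R) (q : ℝ) (hq : q = lam * k + lam / 2) :
    k * (A + 2 * q * P + q ^ 2 * N) + k ^ 2 * lam ^ 2 * N / 2 + k * lam * G
      - 3 / 2 * (k * (A + 2 * R + B)) ≤
    k * (2 * q * (G + q * N + lam / 2 * N) + (-2 * R + lam ^ 2 * k * N + 2 * q * P + lam * P)) := by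
  have hq0 : 0 ≤ q := by rw [hq]; positivity
  have h1 := mul_nonneg (by linarith : (0:ℝ) ≤ k) (Q (-q) 0 1)
  have h2 := mul_nonneg (by linarith : (0:ℝ) ≤ k) (Q lam 1 1)
  have h3 : 0 ≤ k * lam * q * N := by positivity
  have h4 : 0 ≤ k * (k - 1) * lam ^ 2 * N := by
    have : 0 ≤ k - 1 := by linarith
    positivity
  nlinarith

theorem alg_v {k lam n g a b p r : ℝ} (hk : 1 ≤ k) (hn : 0 ≤ n)
    (Q : ∀ x y z : ℝ, 0 ≤ x ^ 2 * n + y ^ 2 * a + z ^ 2 * b + 2 * x * y * p - 2 * x * z * g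
      + 2 * y * z * r) (q : ℝ) (hq : q = lam * k) :
    (a + 2 * q * p + q ^ 2 * n) + 3 / 8 * (lam ^ 2 * k * n) + lam * g / 2
      - 3 / 2 * (a - 2 * r + b) ≤
    2 * q * (-g + q * n - lam / 4 * n) + (2 * r + q * lam * n + 2 * q * p - lam / 2 * p) := by
  have h1 := Q (-q) 0 (-1)
  have h2 := Q (-lam / 2) 1 (-1)
  have h4 : 0 ≤ (k - 1) * lam ^ 2 * n := by
    have : 0 ≤ k - 1 := by linarith
    positivity
  subst hq
  nlinarith

set_option maxHeartbeats 2000000 in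
theorem alg_main {k lam N G A B P R n g a b p r c D M : ℝ} (hk : 1 ≤ k) (hl : 1 ≤ lam)
    (hN : 0 ≤ N) (hG : 0 ≤ G) (hn : 0 ≤ n) (hg : 0 ≤ g) (hc : 0 ≤ c) (hD : 0 ≤ D)
    (hM : M = 72 * c + 4)
    (hL : 1 + 18 * D + 6 * c + 4 * (9 / 2 * M * D + 9 * c * D + 3 / 2 * c) ≤ lam)
    (Qu : ∀ x y z : ℝ, 0 ≤ x ^ 2 * N + y ^ 2 * A + z ^ 2 * B + 2 * x * y * P - 2 * x * z * G
      + 2 * y * z * R)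
    (Qv : ∀ x y z : ℝ, 0 ≤ x ^ 2 * n + y ^ 2 * a + z ^ 2 * b + 2 * x * y * p - 2 * x * z * g
      + 2 * y * z * r)
    (H1 : A + 2 * R + B ≤ 3 * D * (N + G + n))
    (H2 : a - 2 * r + b ≤ c * (B + N + G + n + g)) (q : ℝ) (hq : q = lam * k + lam / 2)
    (q' : ℝ) (hq' : q' = lam * k) :
    A + B + lam * k * G + lam ^ 2 * k ^ 2 * N + (1 / k) * (a + b) + lam * g + lam ^ 2 * k * n ≤
    (64 * (1 + c)) * (M * (k * (2 * q * (G + q * N + lam / 2 * N)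
        + (-2 * R + lam ^ 2 * k * N + 2 * q * P + lam * P)))
      + (2 * q' * (-g + q' * n - lam / 4 * n)
        + (2 * r + q' * lam * n + 2 * q' * p - lam / 2 * p))) := by
  have k0 : 0 < k := by linarith
  have U := alg_u hk hl hN Qu q hq
  have V := alg_v hk hn Qv q' hq'
  set SU := k * (2 * q * (G + q * N + lam / 2 * N)
        + (-2 * R + lam ^ 2 * k * N + 2 * q * P + lam * P))
  set SV := 2 * q' * (-g + q' * n - lam / 4 * n)
        + (2 * r + q' * lam * n + 2 * q' * p - lam / 2 * p)
  have hX : 0 ≤ A + 2 * q * P + q ^ 2 * N := by linarith [Qu q 1 0]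
  have hX' : 0 ≤ a + 2 * q' * p + q' ^ 2 * n := by linarith [Qv q' 1 0]
  have hA : A ≤ 2 * (A + 2 * q * P + q ^ 2 * N) + 2 * (q ^ 2 * N) := by linarith [Qu (2 * q) 1 0]
  have ha : a ≤ 2 * (a + 2 * q' * p + q' ^ 2 * n) + 2 * (q' ^ 2 * n) := by
    linarith [Qv (2 * q') 1 0]
  have hB : B ≤ 2 * (A + 2 * R + B) + 2 * A := by linarith [Qu 0 2 1]
  have hb : b ≤ 2 * (a - 2 * r + b) + 2 * a := by linarith [Qv 0 2 (-1)]
  have hF0 : 0 ≤ A + 2 * R + B := by linarith [Qu 0 1 1]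
  have hF0' : 0 ≤ a - 2 * r + b := by linarith [Qv 0 1 (-1)]
  have ha0 : 0 ≤ a := by linarith [Qv 0 1 0]
  have hb0 : 0 ≤ b := by linarith [Qv 0 0 1]
  generalize hXe : A + 2 * q * P + q ^ 2 * N = X at *
  generalize hXe' : a + 2 * q' * p + q' ^ 2 * n = X' at *
  generalize hFe : A + 2 * R + B = F at *
  generalize hFe' : a - 2 * r + b = F' at *
  clear Qu Qv
  have hMD : 0 ≤ M * D := by rw [hM]; positivity
  have hcD : 0 ≤ c * D := by positivity
  have hl2 : lam ≤ lam ^ 2 := le_self_pow₀ hl (by norm_num)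
  -- basic quantities
  have hlkN : 0 ≤ lam ^ 2 * k ^ 2 * N := by positivity
  have hlkG : 0 ≤ lam * k * G := by positivity
  have hlkn : 0 ≤ lam ^ 2 * k * n := by positivity
  have hkn : 0 ≤ k * n := by positivity
  have hkX : X ≤ k * X := le_mul_of_one_le_left hX hk
  have hkF : F ≤ k * F := le_mul_of_one_le_left hF0 hk
  have hkN : k * N ≤ k ^ 2 * N := by
    have : 0 ≤ k * (k - 1) * N := mul_nonneg (mul_nonneg k0.le (by linarith)) hN
    linarith
  have l18 : 18 * D * (k * N) ≤ lam ^ 2 * k ^ 2 * N := by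
    have h1 : 18 * D * (k * N) ≤ lam ^ 2 * (k * N) :=
      mul_le_mul_of_nonneg_right (by linarith) (by positivity)
    have h2 : lam ^ 2 * (k * N) ≤ lam ^ 2 * (k ^ 2 * N) :=
      mul_le_mul_of_nonneg_left hkN (by positivity)
    linarith
  have l9 : 9 * D * (k * G) ≤ lam * k * G := by
    have h1 : 9 * D * (k * G) ≤ lam * (k * G) :=
      mul_le_mul_of_nonneg_right (by linarith) (by positivity)
    linarith
  have hkF2 : 3 / 2 * (k * F) ≤ 1 / 4 * (lam ^ 2 * k ^ 2 * N) + 1 / 2 * (lam * k * G)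
      + 9 / 2 * D * (k * n) := by
    have := mul_le_mul_of_nonneg_left H1 k0.le
    linarith
  obtain ⟨Z, hZ⟩ : ∃ Z, Z = k * X + lam ^ 2 * k ^ 2 * N + lam * k * G := ⟨_, rfl⟩
  have hkX0 : 0 ≤ k * X := by positivity
  have hZ0 : 0 ≤ Z := by rw [hZ]; positivity
  have hSU : Z / 4 - 9 / 2 * D * (k * n) ≤ SU := by rw [hZ]; linarith
  have hq2 : q ^ 2 * N ≤ 9 / 4 * (lam ^ 2 * k ^ 2 * N) := by
    have h1 : q ≤ 3 / 2 * (lam * k) := by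
      have : lam ≤ lam * k := le_mul_of_one_le_right (by linarith) hk
      linarith
    have h0 : 0 ≤ q := by rw [hq]; positivity
    have h2 := mul_le_mul_of_nonneg_right (pow_le_pow_left₀ h0 h1 2) hN
    linarith
  have hA5 : A ≤ 5 * Z := by rw [hZ]; linarith
  have hB11 : B ≤ 11 * Z + 6 * D * (k * n) := by linarith
  have hNZ : N + G ≤ Z := by
    have h1 : G ≤ lam * k * G := by
      have h3 : 1 ≤ lam * k := one_le_mul_of_one_le_of_one_le hl hk
      exact le_mul_of_one_le_left hG h3
    have h2 : N ≤ lam ^ 2 * k ^ 2 * N := by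
      have h3 : 1 ≤ lam * k := one_le_mul_of_one_le_of_one_le hl hk
      have h4 : 1 ≤ (lam * k) ^ 2 := one_le_pow₀ h3
      rw [← mul_pow]
      exact le_mul_of_one_le_left hN h4
    linarith
  have hnk : n ≤ k * n := le_mul_of_one_le_left hn hk
  have hF' : F' ≤ 12 * (c * Z) + 6 * (c * D) * (k * n) + c * (k * n) + c * g := by
    have : B + N + G + n + g ≤ 12 * Z + 6 * D * (k * n) + k * n + g := by linarith
    have := mul_le_mul_of_nonneg_left this hc
    linarith
  have hl1 : (9 / 2 * (M * D) + 9 * (c * D) + 3 / 2 * c) * (k * n) ≤ 1 / 4 * (lam ^ 2 * k * n) := by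
    have : (9 / 2 * (M * D) + 9 * (c * D) + 3 / 2 * c) * (k * n) ≤ (1 / 4 * lam ^ 2) * (k * n) :=
      mul_le_mul_of_nonneg_right (by linarith) hkn
    linarith
  have hcg : 6 * (c * g) ≤ lam * g := by
    have : 6 * c * g ≤ lam * g := mul_le_mul_of_nonneg_right (by linarith) hg
    linarith
  have hMSU := mul_le_mul_of_nonneg_left hSU (by rw [hM]; positivity : 0 ≤ M)
  have key : Z + X' + 1 / 8 * (lam ^ 2 * k * n) + 1 / 4 * (lam * g) ≤ M * SU + SV := by
    have e : M * (Z / 4 - 9 / 2 * D * (k * n)) = 18 * (c * Z) + Z - 9 / 2 * (M * D) * (k * n) := by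
      rw [hM]; ring
    rw [e] at hMSU
    linarith
  have hlg : 0 ≤ lam * g := by positivity
  have h6D : 6 * D * (k * n) ≤ lam ^ 2 * k * n := by
    have : 6 * D * (k * n) ≤ lam ^ 2 * (k * n) :=
      mul_le_mul_of_nonneg_right (by linarith) hkn
    linarith
  have hknl : k * n ≤ lam ^ 2 * k * n := by
    have : 1 * (k * n) ≤ lam ^ 2 * (k * n) :=
      mul_le_mul_of_nonneg_right (by linarith) hkn
    linarith
  have hgl : g ≤ lam * g := le_mul_of_one_le_left hg hl
  have hF2 : F' ≤ 12 * (c * Z) + 2 * (c * (lam ^ 2 * k * n)) + c * (lam * g) := by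
    have h1 := mul_le_mul_of_nonneg_left h6D hc
    have h2 := mul_le_mul_of_nonneg_left hknl hc
    have h3 := mul_le_mul_of_nonneg_left hgl hc
    linarith
  have hak : a / k ≤ 2 * X' + 2 * (lam ^ 2 * k * n) := by
    rw [div_le_iff₀ k0]
    have : X' ≤ X' * k := le_mul_of_one_le_right hX' hk
    have e : q' ^ 2 * n = lam ^ 2 * k * n * k := by rw [hq']; ring
    rw [e] at ha
    linarith
  have hbk : b / k ≤ 2 * F' + 4 * X' + 4 * (lam ^ 2 * k * n) := by
    have h1 : b / k ≤ (2 * F' + 2 * a) / k := div_le_div_of_nonneg_right hb k0.le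
    have h2 : F' / k ≤ F' := div_le_self hF0' hk
    have e : (2 * F' + 2 * a) / k = 2 * (F' / k) + 2 * (a / k) := by ring
    linarith
  have hfin := mul_le_mul_of_nonneg_left key (by positivity : 0 ≤ 64 * (1 + c))
  have e2 : 1 / k * (a + b) = a / k + b / k := by ring
  rw [e2]
  have p1 : 0 ≤ c * X' := by positivity
  have p2 : 0 ≤ c * (lam ^ 2 * k * n) := by positivity
  have p3 : 0 ≤ c * (lam * g) := by positivity
  have p4 : 0 ≤ c * Z := by positivity
  have hZ2 : lam * k * G + lam ^ 2 * k ^ 2 * N ≤ Z := by rw [hZ]; linarith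
  refine le_trans ?_ hfin
  linarith

theorem ftc_le {T : ℝ} (hT : 0 < T) {f g g' : ℝ → ℝ} (hc : ContinuousOn g (Set.Icc 0 T))
    (hd : ∀ t ∈ Set.Ioo 0 T, HasDerivAt g (g' t) t) (h0 : ∀ t ∈ Set.Ioo 0 T, 0 ≤ f t)
    (hf : ∀ t ∈ Set.Ioo 0 T, f t ≤ g' t) : ∫ t in Set.Ioo 0 T, f t ≤ g T - g 0 := by
  by_cases hi : IntegrableOn f (Set.Ioo 0 T)
  · rw [← integral_Ioc_eq_integral_Ioo, ← intervalIntegral.integral_of_le hT.le]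
    exact intervalIntegral.integral_le_sub_of_hasDeriv_right_of_le hT.le hc
      (fun t ht => (hd t ht).hasDerivWithinAt) ((integrableOn_Icc_iff_integrableOn_Ioo (by simp) (by simp)).2 hi) hf
  · rw [integral_undef hi]
    have := intervalIntegral.integral_le_sub_of_hasDeriv_right_of_le (φ := fun _ => 0) hT.le hc
      (fun t ht => (hd t ht).hasDerivWithinAt) (by simp) (fun t ht => (h0 t ht).trans (hf t ht))
    simpa using this

/-- The energy whose derivative dominates the left-hand side integrand. -/
noncomputable def En {d : ℕ} (M s lam : ℝ) (u v : (Fin d → ℝ) → ℝ → ℝ) (t : ℝ) : ℝ :=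
  Real.exp (2 * s * Real.exp (lam * t)) *
    (M * (s * Real.exp (lam * t) * (Ig u t + (lam * (s * Real.exp (lam * t)) + lam / 2) * In u t
        + lam / 2 * In u t))
      + (-Ig v t + lam * (s * Real.exp (lam * t)) * In v t - lam / 4 * In v t))

theorem En_deriv {d : ℕ} (M s lam : ℝ) {u v : (Fin d → ℝ) → ℝ → ℝ} {t : ℝ}
    (h1 : HasDerivAt (In u) (2 * Ip u t) t) (h2 : HasDerivAt (Ig u) (-2 * Ir u t) t)
    (h3 : HasDerivAt (In v) (2 * Ip v t) t) (h4 : HasDerivAt (Ig v) (-2 * Ir v t) t)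
    (k : ℝ) (hk : k = s * Real.exp (lam * t)) (q : ℝ) (hq : q = lam * k + lam / 2)
    (q' : ℝ) (hq' : q' = lam * k) :
    HasDerivAt (En M s lam u v) (Real.exp (2 * s * Real.exp (lam * t)) *
      (M * (k * (2 * q * (Ig u t + q * In u t + lam / 2 * In u t)
        + (-2 * Ir u t + lam ^ 2 * k * In u t + 2 * q * Ip u t + lam * Ip u t)))
      + (2 * q' * (-Ig v t + q' * In v t - lam / 4 * In v t)
        + (2 * Ir v t + q' * lam * In v t + 2 * q' * Ip v t - lam / 2 * Ip v t)))) t := by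
  have e1 : HasDerivAt (fun t : ℝ => Real.exp (lam * t)) (lam * Real.exp (lam * t)) t := by
    have := ((hasDerivAt_id t).const_mul lam).exp
    simpa [mul_comm] using this
  have e2 : HasDerivAt (fun t : ℝ => s * Real.exp (lam * t)) (lam * k) t := by
    have := e1.const_mul s
    convert! this using 1
    rw [hk]; ring
  have e3 : HasDerivAt (fun t : ℝ => Real.exp (2 * s * Real.exp (lam * t)))
      (Real.exp (2 * s * Real.exp (lam * t)) * (2 * (lam * k))) t := by
    have := (e1.const_mul (2 * s)).exp
    convert! this using 1
    rw [hk]; ring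
  have a1 := (h2.add (((e2.const_mul lam).add_const (lam / 2)).mul h1)).add (h1.const_mul (lam / 2))
  have a2 := (e2.mul a1).const_mul M
  have a3 := (h4.neg.add ((e2.const_mul lam).mul h3)).sub (h3.const_mul (lam / 4))
  have a4 := e3.mul (a2.add a3)
  convert! a4 using 1
  simp only [Pi.add_apply, Pi.mul_apply, Pi.neg_apply, Pi.sub_apply]
  rw [hq, hq', ← hk]
  ring

theorem En_cont {d : ℕ} (M s lam : ℝ) {u v : (Fin d → ℝ) → ℝ → ℝ} {S : Set ℝ}
    (h1 : ContinuousOn (In u) S) (h2 : ContinuousOn (Ig u) S)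
    (h3 : ContinuousOn (In v) S) (h4 : ContinuousOn (Ig v) S) :
    ContinuousOn (En M s lam u v) S := by
  unfold En
  fun_prop

theorem lhs_eq {d : ℕ} {u v : (Fin d → ℝ) → ℝ → ℝ} {K K' : Set (Fin d → ℝ)} (hK : IsCompact K)
    (hK' : IsCompact K') {S : Set ℝ} (hS : IsOpen S) (hu : Sm u) (hv : Sm v) (h : Van K S u)
    (h' : Van K' S v) {t : ℝ} (ht : t ∈ S) (c1 c2 c3 c4 c5 W : ℝ) :
    ∫ x, ((tder u x t) ^ 2 + (lap u x t) ^ 2 + c1 * grad2 u x t + c2 * (u x t) ^ 2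
            + c3 * ((tder v x t) ^ 2 + (lap v x t) ^ 2) + c4 * grad2 v x t
            + c5 * (v x t) ^ 2) * W =
      W * (In (tder u) t + In (lap u) t + c1 * Ig u t + c2 * In u t
        + c3 * (In (tder v) t + In (lap v) t) + c4 * Ig v t + c5 * In v t) := by
  have i1 := (int_one hK (sm_sq (sm_tder hu)) (van_sq (van_tder hS h)) ht)
  have i2 := (int_one hK (sm_sq (sm_lap hu)) (van_sq (van_lap hK h)) ht)
  have i3 := (int_one hK (sm_grad2 hu) (van_grad2 hK h) ht).const_mul c1
  have i4 := (int_one hK (sm_sq hu) (van_sq h) ht).const_mul c2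
  have j1 := (int_one hK' (sm_sq (sm_tder hv)) (van_sq (van_tder hS h')) ht)
  have j2 := (int_one hK' (sm_sq (sm_lap hv)) (van_sq (van_lap hK' h')) ht)
  have j3 := (int_one hK' (sm_grad2 hv) (van_grad2 hK' h') ht).const_mul c4
  have j4 := (int_one hK' (sm_sq hv) (van_sq h') ht).const_mul c5
  have j12 := (j1.fun_add j2).const_mul c3
  rw [integral_mul_const,
    integral_add (((((i1.fun_add i2).fun_add i3).fun_add i4).fun_add j12).fun_add j3) j4,
    integral_add ((((i1.fun_add i2).fun_add i3).fun_add i4).fun_add j12) j3,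
    integral_add (((i1.fun_add i2).fun_add i3).fun_add i4) j12,
    integral_add ((i1.fun_add i2).fun_add i3) i4,
    integral_add (i1.fun_add i2) i3, integral_add i1 i2]
  simp only [integral_const_mul]
  rw [integral_add j1 j2]
  unfold In Ig
  ring

theorem bd_eq {d : ℕ} {u v : (Fin d → ℝ) → ℝ → ℝ} {K K' : Set (Fin d → ℝ)} (hK : IsCompact K)
    (hK' : IsCompact K') {S : Set ℝ} (hu : Sm u) (hv : Sm v) (h : Van K S u)
    (h' : Van K' S v) {t t' : ℝ} (ht : t ∈ S) (ht' : t' ∈ S) (c1 c2 : ℝ) :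
    ∫ x, (c1 * (u x t) ^ 2 + c2 * grad2 v x t') = c1 * In u t + c2 * Ig v t' := by
  rw [integral_add ((int_one hK (sm_sq hu) (van_sq h) ht).const_mul c1)
    ((int_one hK' (sm_grad2 hv) (van_grad2 hK' h') ht').const_mul c2)]
  simp only [integral_const_mul]
  rfl

/-- Comparison of boundary terms. -/
theorem alg_bd {s lam f M Kc W₀ W N0 G0 n0 g0 N G n g I : ℝ} (hs : 1 ≤ s) (hl : 1 ≤ lam)
    (hf : 1 ≤ f) (hM : 4 ≤ M) (hKc : 64 ≤ Kc) (hW0 : 0 ≤ W₀) (hW : 0 ≤ W)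
    (hN0 : 0 ≤ N0) (hG0 : 0 ≤ G0) (hn0 : 0 ≤ n0) (hg0 : 0 ≤ g0)
    (hN : 0 ≤ N) (hG : 0 ≤ G) (hn : 0 ≤ n) (hg : 0 ≤ g)
    (hI : I ≤ Kc * (W * (M * (s * f * (G + (lam * (s * f) + lam / 2) * N + lam / 2 * N))
      + (-g + lam * (s * f) * n - lam / 4 * n))) -
      Kc * (W₀ * (M * (s * (G0 + (lam * s + lam / 2) * N0 + lam / 2 * N0))
      + (-g0 + lam * s * n0 - lam / 4 * n0)))) :
    I + (s ^ 2 * lam * W₀ * N0 + s * W₀ * G0) + (s * lam * W₀ * n0 + W * g) ≤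
      (2 * Kc * M) * (s * lam * f * W * n + W₀ * g0)
      + (2 * Kc * M) * (s ^ 2 * lam ^ 2 * f ^ 2 * W * N + s * f * W * G) := by
  have hs0 : 0 < s := by linarith
  have hl0 : 0 < lam := by linarith
  have hf0 : 0 < f := by linarith
  -- time zero
  have z : s ^ 2 * lam * N0 + s * G0 + s * lam * n0 ≤
      Kc * (M * (s * (G0 + (lam * s + lam / 2) * N0 + lam / 2 * N0))
      + (-g0 + lam * s * n0 - lam / 4 * n0)) + Kc * g0 := by
    have b1 : s * G0 + s ^ 2 * lam * N0 ≤
        M * (s * (G0 + (lam * s + lam / 2) * N0 + lam / 2 * N0)) := by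
      have h1 : 0 ≤ s * G0 := by positivity
      have h2 : 0 ≤ s ^ 2 * lam * N0 := by positivity
      have h3 : 0 ≤ s * lam * N0 := by positivity
      have h4 : s * G0 + s ^ 2 * lam * N0 ≤
        s * (G0 + (lam * s + lam / 2) * N0 + lam / 2 * N0) := by linarith
      exact h4.trans (le_mul_of_one_le_left (by linarith) (by linarith))
    have b2 : 1 / 2 * (s * lam * n0) ≤ lam * s * n0 - lam / 4 * n0 := by
      have : lam * n0 ≤ s * (lam * n0) := le_mul_of_one_le_left (by positivity) hs
      linarith [mul_nonneg hl0.le hn0]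
    have h1 : 0 ≤ s * G0 + s ^ 2 * lam * N0 := by positivity
    have h2 : 0 ≤ s * lam * n0 := by positivity
    have b3 : 2 * ((s * G0 + s ^ 2 * lam * N0) + 1 / 2 * (s * lam * n0)) ≤
        Kc * ((s * G0 + s ^ 2 * lam * N0) + 1 / 2 * (s * lam * n0)) :=
      mul_le_mul_of_nonneg_right (by linarith) (by linarith)
    have b4 := mul_le_mul_of_nonneg_left (add_le_add b1 b2) (by linarith : 0 ≤ Kc)
    linarith
  -- time T
  have w : Kc * (M * (s * f * (G + (lam * (s * f) + lam / 2) * N + lam / 2 * N))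
      + (-g + lam * (s * f) * n - lam / 4 * n)) + g ≤
      (2 * Kc * M) * (s * lam * f * n + s ^ 2 * lam ^ 2 * f ^ 2 * N + s * f * G) := by
    have c1 : s * f * (G + (lam * (s * f) + lam / 2) * N + lam / 2 * N) ≤
        s * f * G + 2 * (s ^ 2 * lam ^ 2 * f ^ 2 * N) := by
      have h1 : lam * (s * f) ^ 2 * N ≤ lam * (lam * (s * f) ^ 2 * N) :=
        le_mul_of_one_le_left (by positivity) hl
      have h2 : lam * (s * f) * N ≤ (s * f) * (lam * (s * f) * N) :=
        le_mul_of_one_le_left (by positivity) (one_le_mul_of_one_le_of_one_le hs hf)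
      linarith
    have c2 : -g + lam * (s * f) * n - lam / 4 * n ≤ s * lam * f * n - g := by
      linarith [mul_nonneg hl0.le hn]
    have c3 : s * lam * f * n ≤ M * (2 * (s * lam * f * n)) := by
      have h1 : 0 ≤ s * lam * f * n := by positivity
      exact (by linarith : s * lam * f * n ≤ 2 * (s * lam * f * n)).trans
        (le_mul_of_one_le_left (by linarith) (by linarith))
    have c4 := mul_le_mul_of_nonneg_left c1 (by linarith : 0 ≤ M)
    have c5 := mul_le_mul_of_nonneg_left (add_le_add c4 (c2.trans (sub_le_sub_right c3 g)))
      (by linarith : 0 ≤ Kc)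
    have c6 : g ≤ Kc * g := le_mul_of_one_le_left hg (by linarith)
    have c7 : 0 ≤ Kc * M * (s * f * G) := by
      have : 0 ≤ Kc := by linarith
      have : 0 ≤ M := by linarith
      positivity
    linarith
  have z' := mul_le_mul_of_nonneg_left z hW0
  have w' := mul_le_mul_of_nonneg_left w hW
  have y : W₀ * (Kc * g0) ≤ (2 * Kc * M) * (W₀ * g0) := by
    have h1 : 0 ≤ Kc * (W₀ * g0) := mul_nonneg (by linarith) (mul_nonneg hW0 hg0)
    have h2 : Kc * (W₀ * g0) ≤ (2 * M) * (Kc * (W₀ * g0)) :=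
      le_mul_of_one_le_left h1 (by linarith)
    linarith
  linarith

/-- Carleman estimate with two large parameters (Theorem 2.1) for the linearized
mean field game system, with weight `φ(t) = e^{λt}`. -/
theorem carleman_two_parameters_mfg
    (d : ℕ) (hd : 1 ≤ d) (T : ℝ) (hT : 0 < T) (ρ₀ C₀ : ℝ) (hC₀ : 0 < C₀) :
    ∃ C > (0:ℝ), ∃ s₁ ≥ (1:ℝ), ∀ s ≥ s₁, ∀ lam ≥ s₁,
      ∀ u v : (Fin d → ℝ) → ℝ → ℝ, Admissible T u → Admissible T v →
      (∀ x : Fin d → ℝ, ∀ t ∈ Set.Ioo (0:ℝ) T,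
        |tder u x t + lap u x t| ≤ C₀ * (|u x t| + gradNorm u x t + |v x t|)) →
      (∀ x : Fin d → ℝ, ∀ t ∈ Set.Ioo (0:ℝ) T,
        |tder v x t - lap v x t - ρ₀ * lap u x t| ≤
          C₀ * (|u x t| + |v x t| + gradNorm u x t + gradNorm v x t)) →
      (∫ t in Set.Ioo (0:ℝ) T, ∫ x : Fin d → ℝ,
          ((tder u x t) ^ 2 + (lap u x t) ^ 2
            + s * lam * Real.exp (lam * t) * grad2 u x t
            + s ^ 2 * lam ^ 2 * (Real.exp (lam * t)) ^ 2 * (u x t) ^ 2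
            + (1 / (s * Real.exp (lam * t))) * ((tder v x t) ^ 2 + (lap v x t) ^ 2)
            + lam * grad2 v x t
            + s * lam ^ 2 * Real.exp (lam * t) * (v x t) ^ 2)
          * Real.exp (2 * s * Real.exp (lam * t)))
      + (∫ x : Fin d → ℝ,
          (s ^ 2 * lam * (u x 0) ^ 2 + s * grad2 u x 0) * Real.exp (2 * s))
      + (∫ x : Fin d → ℝ,
          (s * lam * (v x 0) ^ 2 * Real.exp (2 * s)
            + grad2 v x T * Real.exp (2 * s * Real.exp (lam * T))))
      ≤ C * (∫ x : Fin d → ℝ,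
            (s * lam * Real.exp (lam * T) * (v x T) ^ 2
                * Real.exp (2 * s * Real.exp (lam * T))
              + grad2 v x 0 * Real.exp (2 * s)))
        + C * (∫ x : Fin d → ℝ,
            (s ^ 2 * lam ^ 2 * (Real.exp (lam * T)) ^ 2 * (u x T) ^ 2
              + s * Real.exp (lam * T) * grad2 u x T)
            * Real.exp (2 * s * Real.exp (lam * T))) := by
  set D := C₀ ^ 2 with hD
  set c := 8 * C₀ ^ 2 + 2 * ρ₀ ^ 2 with hc
  set M := 72 * c + 4 with hM
  have hD0 : 0 ≤ D := by positivity
  have hc0 : 0 ≤ c := by positivity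
  have hM4 : 4 ≤ M := by linarith
  have hL1 : 0 ≤ 18 * D + 6 * c + 4 * (9 / 2 * M * D + 9 * c * D + 3 / 2 * c) := by positivity
  refine ⟨2 * (64 * (1 + c)) * M, by positivity,
    1 + 18 * D + 6 * c + 4 * (9 / 2 * M * D + 9 * c * D + 3 / 2 * c), by linarith, ?_⟩
  intro s hs' lam hlam u v hu hv hpu hpv
  have hs : 1 ≤ s := by linarith
  have hl : 1 ≤ lam := by linarith
  obtain ⟨hus, K, hK, hKu⟩ := hu
  obtain ⟨hvs, K', hK', hKv⟩ := hv
  replace hus : Sm u := hus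
  replace hvs : Sm v := hvs
  replace hKu : Van K (Set.Icc 0 T) u := hKu
  replace hKv : Van K' (Set.Icc 0 T) v := hKv
  have hOu := van_mono hKu Set.Ioo_subset_Icc_self
  have hOv := van_mono hKv Set.Ioo_subset_Icc_self
  have m0 : (0:ℝ) ∈ Set.Icc 0 T := ⟨le_rfl, hT.le⟩
  have mT : T ∈ Set.Icc 0 T := ⟨hT.le, le_rfl⟩
  have ho : IsOpen (Set.Ioo 0 T) := isOpen_Ioo
  have main := ftc_le hT (g := fun t => (64 * (1 + c)) * En M s lam u v t)
    (f := fun t => ∫ x : Fin d → ℝ,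
          ((tder u x t) ^ 2 + (lap u x t) ^ 2
            + s * lam * Real.exp (lam * t) * grad2 u x t
            + s ^ 2 * lam ^ 2 * (Real.exp (lam * t)) ^ 2 * (u x t) ^ 2
            + (1 / (s * Real.exp (lam * t))) * ((tder v x t) ^ 2 + (lap v x t) ^ 2)
            + lam * grad2 v x t
            + s * lam ^ 2 * Real.exp (lam * t) * (v x t) ^ 2)
          * Real.exp (2 * s * Real.exp (lam * t)))
    (continuousOn_const.mul (En_cont M s lam (cont_In hK hus hKu) (cont_Ig hK hus hKu)
      (cont_In hK' hvs hKv) (cont_Ig hK' hvs hKv)))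
    (fun t ht => (En_deriv M s lam (deriv_In hK ho hus hOu ht) (deriv_Ig hK ho hus hOu ht)
      (deriv_In hK' ho hvs hOv ht) (deriv_Ig hK' ho hvs hOv ht) _ rfl _ rfl _ rfl).const_mul
        (64 * (1 + c)))
    (by
      intro t ht
      refine integral_nonneg fun x => ?_
      have := grad2_nonneg u x t
      have := grad2_nonneg v x t
      positivity)
    (by
      intro t ht
      rw [lhs_eq hK hK' ho hus hvs hOu hOv ht, mul_left_comm]
      refine mul_le_mul_of_nonneg_left ?_ (Real.exp_pos _).le
      have hk : 1 ≤ s * Real.exp (lam * t) := by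
        refine one_le_mul_of_one_le_of_one_le hs (Real.one_le_exp ?_)
        have := ht.1
        positivity
      have := alg_main hk hl (In_nonneg u t) (Ig_nonneg u t) (In_nonneg v t) (Ig_nonneg v t)
        hc0 hD0 hM hlam (quad_nonneg hK ho hus hOu ht) (quad_nonneg hK' ho hvs hOv ht)
        (bound_u hK hK' ho hus hvs hOu hOv ht C₀ fun x => hpu x t ht)
        (bound_v hK hK' ho hus hvs hOu hOv ht C₀ ρ₀ fun x => hpv x t ht) _ rfl _ rfl
      refine le_trans (le_of_eq ?_) this
      ring)
  have I1 : (∫ x : Fin d → ℝ,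
      (s ^ 2 * lam * (u x 0) ^ 2 + s * grad2 u x 0) * Real.exp (2 * s)) =
      s ^ 2 * lam * Real.exp (2 * s) * In u 0 + s * Real.exp (2 * s) * Ig u 0 := by
    rw [← bd_eq hK hK hus hus hKu hKu m0 m0]
    congr 1; ext x; ring
  have I2 : (∫ x : Fin d → ℝ,
          (s * lam * (v x 0) ^ 2 * Real.exp (2 * s)
            + grad2 v x T * Real.exp (2 * s * Real.exp (lam * T)))) =
      s * lam * Real.exp (2 * s) * In v 0 + Real.exp (2 * s * Real.exp (lam * T)) * Ig v T := by
    rw [← bd_eq hK' hK' hvs hvs hKv hKv m0 mT]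
    congr 1; ext x; ring
  have I3 : (∫ x : Fin d → ℝ,
            (s * lam * Real.exp (lam * T) * (v x T) ^ 2
                * Real.exp (2 * s * Real.exp (lam * T))
              + grad2 v x 0 * Real.exp (2 * s))) =
      s * lam * Real.exp (lam * T) * Real.exp (2 * s * Real.exp (lam * T)) * In v T
        + Real.exp (2 * s) * Ig v 0 := by
    rw [← bd_eq hK' hK' hvs hvs hKv hKv mT m0]
    congr 1; ext x; ring
  have I4 : (∫ x : Fin d → ℝ,
            (s ^ 2 * lam ^ 2 * (Real.exp (lam * T)) ^ 2 * (u x T) ^ 2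
              + s * Real.exp (lam * T) * grad2 u x T)
            * Real.exp (2 * s * Real.exp (lam * T))) =
      s ^ 2 * lam ^ 2 * (Real.exp (lam * T)) ^ 2 * Real.exp (2 * s * Real.exp (lam * T)) * In u T
        + s * Real.exp (lam * T) * Real.exp (2 * s * Real.exp (lam * T)) * Ig u T := by
    rw [← bd_eq hK hK hus hus hKu hKu mT mT]
    congr 1; ext x; ring
  rw [I1, I2, I3, I4]
  simp only [En, mul_zero, Real.exp_zero, mul_one] at main
  exact alg_bd hs hl (Real.one_le_exp (by positivity)) hM4 (by linarith) (Real.exp_pos _).le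
    (Real.exp_pos _).le (In_nonneg _ _) (Ig_nonneg _ _) (In_nonneg _ _) (Ig_nonneg _ _)
    (In_nonneg _ _) (Ig_nonneg _ _) (In_nonneg _ _) (Ig_nonneg _ _) main
end

section
/- There exist constants C > 0 and s₁ ≥ 1, depending only on d and T, such that for all s ≥ s₁, λ ≥ s₁ and every admissible function v: ∫_Q { (1/(sφ))(|∂_t v|² + |Δv|²) + λ|∇v|² + sλ²φ|v|² } e^{2sφ} dx dt + ∫_{ℝ^d} ( sλ|v(x,0)|² e^{2s} + |∇v(x,T)|² e^{2sφ(T)} ) dx ≤ C ∫_Q |∂_t v − Δ v|² e^{2sφ} dx dt + C ∫_{ℝ^d} ( sλφ(T)|v(x,T)|² e^{2sφ(T)} + |∇v(x,0)|² e^{2s} ) dx. -/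
open MeasureTheory Real Set

/-- Directional derivative. -/
noncomputable def dd {d : ℕ} (u : (Fin d → ℝ) × ℝ) (f : (Fin d → ℝ) × ℝ → ℝ) (p : (Fin d → ℝ) × ℝ) : ℝ :=
  fderiv ℝ f p u

/-- Continuous and vanishing for `x ∉ K`, `t ∈ [0,T]`. -/
def GC {d : ℕ} (T : ℝ) (K : Set (Fin d → ℝ)) (f : (Fin d → ℝ) × ℝ → ℝ) : Prop :=
  Continuous f ∧ ∀ x t, x ∉ K → t ∈ Set.Icc (0 : ℝ) T → f (x, t) = 0

lemma dd_smooth {d : ℕ} {f : (Fin d → ℝ) × ℝ → ℝ} (hf : ContDiff ℝ (⊤ : ℕ∞) f)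
    (u : (Fin d → ℝ) × ℝ) : ContDiff ℝ (⊤ : ℕ∞) (dd u f) := by
  have h : ContDiff ℝ (⊤ : ℕ∞) (fderiv ℝ f) := hf.fderiv_right (by simp)
  exact h.clm_apply contDiff_const

lemma dd_GC {d : ℕ} {T : ℝ} (hT : 0 < T) {K : Set (Fin d → ℝ)} (hK : IsCompact K)
    {f : (Fin d → ℝ) × ℝ → ℝ} (hf : ContDiff ℝ (⊤ : ℕ∞) f) (h : GC T K f)
    (u : (Fin d → ℝ) × ℝ) : GC T K (dd u f) := by
  have hc := (dd_smooth hf u).continuous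
  refine ⟨hc, fun x t hx ht => ?_⟩
  have key : ∀ t ∈ Set.Ioo (0:ℝ) T, dd u f (x, t) = 0 := by
    intro t ht
    have hopen : IsOpen (Kᶜ ×ˢ Set.Ioo (0:ℝ) T) := hK.isClosed.isOpen_compl.prod isOpen_Ioo
    have hev : f =ᶠ[nhds (x, t)] fun _ => (0:ℝ) := by
      filter_upwards [hopen.mem_nhds (Set.mk_mem_prod hx ht)] with p hp
      exact h.2 p.1 p.2 hp.1 (Set.Ioo_subset_Icc_self hp.2)
    simp [dd, hev.fderiv_eq]
  have hcl : IsClosed {t : ℝ | dd u f (x, t) = 0} :=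
    isClosed_eq (hc.comp (by fun_prop)) continuous_const
  have := hcl.closure_subset_iff.2 (show Set.Ioo (0:ℝ) T ⊆ {t : ℝ | dd u f (x, t) = 0} from key)
  rw [closure_Ioo hT.ne] at this
  exact this ht

namespace GC
variable {d : ℕ} {T : ℝ} {K : Set (Fin d → ℝ)} {f g : (Fin d → ℝ) × ℝ → ℝ}

lemma mul_left (hg : Continuous g) (h : GC T K f) : GC T K (fun p => g p * f p) :=
  ⟨hg.mul h.1, fun x t hx ht => by simp [h.2 x t hx ht]⟩

lemma mul_right (h : GC T K f) (hg : Continuous g) : GC T K (fun p => f p * g p) :=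
  ⟨h.1.mul hg, fun x t hx ht => by simp [h.2 x t hx ht]⟩

lemma add (h : GC T K f) (hg : GC T K g) : GC T K (fun p => f p + g p) :=
  ⟨h.1.add hg.1, fun x t hx ht => by simp [h.2 x t hx ht, hg.2 x t hx ht]⟩

lemma sub (h : GC T K f) (hg : GC T K g) : GC T K (fun p => f p - g p) :=
  ⟨h.1.sub hg.1, fun x t hx ht => by simp [h.2 x t hx ht, hg.2 x t hx ht]⟩

lemma sq (h : GC T K f) : GC T K (fun p => f p ^ 2) :=
  ⟨h.1.pow 2, fun x t hx ht => by simp [h.2 x t hx ht]⟩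

lemma sum {F : Fin d → (Fin d → ℝ) × ℝ → ℝ} (h : ∀ i, GC T K (F i)) :
    GC T K (fun p => ∑ i, F i p) :=
  ⟨continuous_finsetSum _ fun i _ => (h i).1,
    fun x t hx ht => Finset.sum_eq_zero fun i _ => (h i).2 x t hx ht⟩

lemma intX (h : GC T K f) (hK : IsCompact K) {t : ℝ} (ht : t ∈ Set.Icc (0:ℝ) T) :
    Integrable (fun x => f (x, t)) := by
  refine Continuous.integrable_of_hasCompactSupport (h.1.comp (by fun_prop)) ?_
  exact HasCompactSupport.intro hK fun x hx => h.2 x t hx ht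

lemma intP (h : GC T K f) (hK : IsCompact K) :
    Integrable (Function.uncurry fun (t : ℝ) (x : Fin d → ℝ) => f (x, t))
      ((volume.restrict (Set.Ioo (0:ℝ) T)).prod volume) := by
  have hc : Continuous (Function.uncurry fun (t : ℝ) (x : Fin d → ℝ) => f (x, t)) := by
    have := h.1
    simp only [Function.uncurry_def]
    fun_prop
  have h1 : IntegrableOn (Function.uncurry fun (t : ℝ) (x : Fin d → ℝ) => f (x, t))
      (Set.Icc (0:ℝ) T ×ˢ K) (volume.prod volume) :=
    hc.continuousOn.integrableOn_compact (isCompact_Icc.prod hK)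
  have h2 : IntegrableOn (Function.uncurry fun (t : ℝ) (x : Fin d → ℝ) => f (x, t))
      (Set.Ioo (0:ℝ) T ×ˢ Set.univ) (volume.prod volume) := by
    refine h1.of_forall_sdiff_eq_zero (measurableSet_Ioo.prod MeasurableSet.univ) ?_
    rintro ⟨t, x⟩ ⟨⟨ht, -⟩, hn⟩
    have ht' := Set.Ioo_subset_Icc_self ht
    exact h.2 x t (fun hx => hn ⟨ht', hx⟩) ht'
  rw [IntegrableOn, ← Measure.prod_restrict, Measure.restrict_univ] at h2
  exact h2

lemma intT (h : GC T K f) (hK : IsCompact K) :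
    Integrable (fun t => ∫ x, f (x, t)) (volume.restrict (Set.Ioo (0:ℝ) T)) :=
  (h.intP hK).integral_prod_left

end GC

lemma spd_eq {d : ℕ} {f : (Fin d → ℝ) × ℝ → ℝ} (hf : ContDiff ℝ (⊤ : ℕ∞) f) (i : Fin d)
    (x : Fin d → ℝ) (t : ℝ) :
    fderiv ℝ (fun y => f (y, t)) x (Pi.single i 1) = dd (Pi.single i 1, 0) f (x, t) := by
  have h1 : HasFDerivAt f (fderiv ℝ f (x, t)) (x, t) :=
    (hf.differentiable (by simp) _).hasFDerivAt
  have h2 : HasFDerivAt (fun y : Fin d → ℝ => (y, t))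
      (ContinuousLinearMap.inl ℝ (Fin d → ℝ) ℝ) x := hasFDerivAt_prodMk_left x t
  have h3 := (h1.comp x h2).fderiv
  have h4 : fderiv ℝ (fun y => f (y, t)) x
      = (fderiv ℝ f (x, t)).comp (ContinuousLinearMap.inl ℝ (Fin d → ℝ) ℝ) := h3
  rw [h4]; simp [dd]

lemma hasDerivAt_t {d : ℕ} {f : (Fin d → ℝ) × ℝ → ℝ} (hf : ContDiff ℝ (⊤ : ℕ∞) f)
    (x : Fin d → ℝ) (t : ℝ) :
    HasDerivAt (fun r => f (x, r)) (dd (0, 1) f (x, t)) t := by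
  have h1 : HasFDerivAt f (fderiv ℝ f (x, t)) (x, t) :=
    (hf.differentiable (by simp) _).hasFDerivAt
  have h2 : HasFDerivAt (fun r : ℝ => (x, r))
      (ContinuousLinearMap.inr ℝ (Fin d → ℝ) ℝ) t := hasFDerivAt_prodMk_right x t
  have h3 := (h1.comp t h2).hasDerivAt
  simpa [dd, Function.comp_def] using h3

lemma dd_comm {d : ℕ} {f : (Fin d → ℝ) × ℝ → ℝ} (hf : ContDiff ℝ (⊤ : ℕ∞) f)
    (u w p : (Fin d → ℝ) × ℝ) : dd u (dd w f) p = dd w (dd u f) p := by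
  have h : Differentiable ℝ (fderiv ℝ f) :=
    (hf.fderiv_right (m := (⊤ : ℕ∞)) (by simp)).differentiable (by simp)
  have key : ∀ a b : (Fin d → ℝ) × ℝ, dd a (dd b f) p = fderiv ℝ (fderiv ℝ f) p a b := by
    intro a b
    have h1 : HasFDerivAt (fun q => fderiv ℝ f q b) _ p :=
      (h p).hasFDerivAt.clm_apply (hasFDerivAt_const b p)
    have h2 : dd a (dd b f) p = fderiv ℝ (fun q => fderiv ℝ f q b) p a := rfl
    rw [h2, h1.fderiv]; simp
  rw [key, key]
  exact (hf.contDiffAt.isSymmSndFDerivAt (by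
    simp only [minSmoothness_of_isRCLikeNormedField]
    exact WithTop.coe_le_coe.2 (le_top : (2 : ℕ∞) ≤ ⊤))).eq u w

lemma ibp_s3 {d : ℕ} {T : ℝ} (hT : 0 < T) {K : Set (Fin d → ℝ)} (hK : IsCompact K)
    {f g : (Fin d → ℝ) × ℝ → ℝ} (hf : ContDiff ℝ (⊤ : ℕ∞) f) (hg : ContDiff ℝ (⊤ : ℕ∞) g)
    (hf' : GC T K f) (hg' : GC T K g) (i : Fin d) {t : ℝ} (ht : t ∈ Set.Icc (0:ℝ) T) :
    ∫ x, (f (x, t) * dd (Pi.single i 1, 0) g (x, t)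
      + dd (Pi.single i 1, 0) f (x, t) * g (x, t)) = 0 := by
  have a1 := (hf'.mul_right (dd_GC hT hK hg hg' (Pi.single i 1, 0)).1).intX hK ht
  have a2 := ((dd_GC hT hK hf hf' (Pi.single i 1, 0)).mul_right hg'.1).intX hK ht
  have a3 := (hf'.mul_right hg'.1).intX hK ht
  have hd1 : Differentiable ℝ (fun y => f (y, t)) :=
    (hf.differentiable (by simp)).comp (by fun_prop)
  have hd2 : Differentiable ℝ (fun y => g (y, t)) :=
    (hg.differentiable (by simp)).comp (by fun_prop)
  rw [integral_add a1 a2]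
  have := integral_mul_fderiv_eq_neg_fderiv_mul_of_integrable (μ := volume)
    (f := fun y => f (y, t)) (g := fun y => g (y, t)) (v := Pi.single i 1)
    (by simpa only [spd_eq hf] using a2) (by simpa only [spd_eq hg] using a1) a3
    (fun x _ => hd1 x) (fun x _ => hd2 x)
  simp only [spd_eq hf, spd_eq hg] at this
  rw [this]; ring

lemma ftc {d : ℕ} {T : ℝ} (hT : 0 < T) {K : Set (Fin d → ℝ)} (hK : IsCompact K)
    {q : (Fin d → ℝ) × ℝ → ℝ} (hq : ContDiff ℝ (⊤ : ℕ∞) q) (hq' : GC T K q) :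
    ∫ x, (q (x, T) - q (x, 0)) = ∫ t in Set.Ioo (0:ℝ) T, ∫ x, dd (0, 1) q (x, t) := by
  have hG := dd_GC hT hK hq hq' (0, 1)
  rw [integral_integral_swap (hG.intP hK)]
  refine integral_congr_ae (Filter.Eventually.of_forall fun x => ?_)
  have hc : Continuous fun t => dd (0, 1) q (x, t) := hG.1.comp (by fun_prop)
  have := intervalIntegral.integral_eq_sub_of_hasDerivAt (a := 0) (b := T)
    (fun t _ => hasDerivAt_t hq x t) (hc.intervalIntegrable _ _)
  rw [intervalIntegral.integral_of_le hT.le, integral_Ioc_eq_integral_Ioo] at this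
  exact this.symm

/-- The pointwise algebraic inequality. -/
lemma alg (s l φ E a b v G : ℝ) (hs : 1 ≤ s) (hl : 1 ≤ l) (hφ : 1 ≤ φ) (hE : 0 < E) :
    ((1 / (s * φ)) * (a ^ 2 + b ^ 2) + l * G + s * l ^ 2 * φ * v ^ 2) * E
      ≤ 7 * ((a - b) ^ 2 * E)
        - 7 * ((-(2 * (a + s * l * φ * v) * (b + s * l * φ * v) + s * l ^ 2 * φ * v ^ 2)) * E)
        + l * E * (G + v * b) := by
  have hsφ : 1 ≤ s * φ := one_le_mul_of_one_le_of_one_le hs hφ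
  have hpos : 0 < s * φ := by linarith
  set k := s * φ with hk
  have h1 : ∀ c : ℝ, (1 / k) * c ^ 2 ≤ 2 * (c + k * (l * v)) ^ 2 + 2 * k * (l * v) ^ 2 := by
    intro c
    have : (1 / k) * c ^ 2 ≤ (1 / k) * (2 * (c + k * (l * v)) ^ 2 + 2 * (k * (l * v)) ^ 2) := by
      apply mul_le_mul_of_nonneg_left _ (by positivity)
      nlinarith [sq_nonneg (c + 2 * (k * (l * v)))]
    have h2 : (1 / k) * (2 * (c + k * (l * v)) ^ 2) ≤ 2 * (c + k * (l * v)) ^ 2 := by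
      apply mul_le_of_le_one_left (by positivity)
      rw [div_le_one hpos]; exact hsφ
    have h3 : (1 / k) * (2 * (k * (l * v)) ^ 2) = 2 * k * (l * v) ^ 2 := by
      field_simp
    linarith [mul_add (1 / k) (2 * (c + k * (l * v)) ^ 2) (2 * (k * (l * v)) ^ 2)]
  have ha := h1 a
  have hb := h1 b
  have hm : (l * v) ^ 2 ≤ k * (l * v) ^ 2 := le_mul_of_one_le_left (sq_nonneg _) hsφ
  have main : (1 / k) * (a ^ 2 + b ^ 2) + l * G + s * l ^ 2 * φ * v ^ 2 ≤
      7 * (a - b) ^ 2 +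
      7 * (2 * (a + s * l * φ * v) * (b + s * l * φ * v) + s * l ^ 2 * φ * v ^ 2)
        + l * (G + v * b) := by
    have e1 : s * l ^ 2 * φ * v ^ 2 = k * (l * v) ^ 2 := by rw [hk]; ring
    have e2 : s * l * φ * v = k * (l * v) := by rw [hk]; ring
    rw [e1, e2]
    have e3 : l * (G + v * b) = l * G + (l * v) * b := by ring
    rw [e3]
    generalize l * v = w at *
    nlinarith [sq_nonneg (b + k * w + w), sq_nonneg (a + k * w), sq_nonneg (b + k * w),
      mul_nonneg hpos.le (sq_nonneg w)]
  have := mul_le_mul_of_nonneg_right main hE.le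
  linarith


lemma zero_sum {d : ℕ} {T : ℝ} (hT : 0 < T) {K : Set (Fin d → ℝ)} (hK : IsCompact K)
    {f : Fin d → (Fin d → ℝ) × ℝ → ℝ} {g : (Fin d → ℝ) × ℝ → ℝ}
    (hf : ∀ i, ContDiff ℝ (⊤ : ℕ∞) (f i)) (hg : ContDiff ℝ (⊤ : ℕ∞) g)
    (hf' : ∀ i, GC T K (f i)) (hg' : GC T K g) {t : ℝ} (ht : t ∈ Set.Icc (0:ℝ) T) :
    ∫ x, ∑ i, (f i (x, t) * dd (Pi.single i 1, 0) g (x, t)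
      + dd (Pi.single i 1, 0) (f i) (x, t) * g (x, t)) = 0 := by
  rw [integral_finsetSum]
  · exact Finset.sum_eq_zero fun i _ => ibp_s3 hT hK (hf i) hg (hf' i) hg' i ht
  · intro i _
    exact (((hf' i).mul_right (dd_GC hT hK hg hg' _).1).add
      ((dd_GC hT hK (hf i) (hf' i) _).mul_right hg'.1)).intX hK ht

/-- Carleman estimate (4.2) with two large parameters for the forward heat
operator `∂_t − Δ`, with weight `φ(t) = e^{λt}`. -/
theorem carleman_forward_heat
    (d : ℕ) (hd : 1 ≤ d) (T : ℝ) (hT : 0 < T) :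
    ∃ C > (0:ℝ), ∃ s₁ ≥ (1:ℝ), ∀ s ≥ s₁, ∀ lam ≥ s₁,
      ∀ v : (Fin d → ℝ) → ℝ → ℝ, Admissible T v →
      (∫ t in Set.Ioo (0:ℝ) T, ∫ x : Fin d → ℝ,
          ((1 / (s * Real.exp (lam * t))) * ((tder v x t) ^ 2 + (lap v x t) ^ 2)
            + lam * grad2 v x t
            + s * lam ^ 2 * Real.exp (lam * t) * (v x t) ^ 2)
          * Real.exp (2 * s * Real.exp (lam * t)))
      + (∫ x : Fin d → ℝ,
          (s * lam * (v x 0) ^ 2 * Real.exp (2 * s)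
            + grad2 v x T * Real.exp (2 * s * Real.exp (lam * T))))
      ≤ C * (∫ t in Set.Ioo (0:ℝ) T, ∫ x : Fin d → ℝ,
            (tder v x t - lap v x t) ^ 2 * Real.exp (2 * s * Real.exp (lam * t)))
        + C * (∫ x : Fin d → ℝ,
            (s * lam * Real.exp (lam * T) * (v x T) ^ 2
                * Real.exp (2 * s * Real.exp (lam * T))
              + grad2 v x 0 * Real.exp (2 * s))) := by
  refine ⟨7, by norm_num, 1, le_refl _, ?_⟩
  intro s hs l hl v hv
  obtain ⟨hV, K, hK, hv0⟩ := hv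
  set V : (Fin d → ℝ) × ℝ → ℝ := fun p => v p.1 p.2 with hVdef
  have gV : GC T K V := ⟨hV.continuous, hv0⟩
  set Vt := dd (0, 1) V with hVt
  set Vi : Fin d → (Fin d → ℝ) × ℝ → ℝ := fun i => dd (Pi.single i 1, 0) V with hVi
  set Vii : Fin d → (Fin d → ℝ) × ℝ → ℝ := fun i => dd (Pi.single i 1, 0) (Vi i) with hVii
  have sVt : ContDiff ℝ (⊤ : ℕ∞) Vt := dd_smooth hV _
  have gVt : GC T K Vt := dd_GC hT hK hV gV _
  have sVi : ∀ i, ContDiff ℝ (⊤ : ℕ∞) (Vi i) := fun i => dd_smooth hV _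
  have gVi : ∀ i, GC T K (Vi i) := fun i => dd_GC hT hK hV gV _
  have gVii : ∀ i, GC T K (Vii i) := fun i => dd_GC hT hK (sVi i) (gVi i) _
  have e_t : ∀ x t, tder v x t = Vt (x, t) := fun x t => (hasDerivAt_t hV x t).deriv
  have e_i : ∀ i x t, spd i (fun y => v y t) x = Vi i (x, t) := fun i x t => spd_eq hV i x t
  have e_g : ∀ x t, grad2 v x t = ∑ i, Vi i (x, t) ^ 2 := fun x t => by
    simp only [grad2, e_i]
  have e_l : ∀ x t, lap v x t = ∑ i, Vii i (x, t) := fun x t => by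
    simp only [lap, pdij, e_i]
    exact Finset.sum_congr rfl fun i _ => spd_eq (sVi i) i x t
  have e_v : ∀ x t, v x t = V (x, t) := fun x t => rfl
  simp only [e_t, e_g, e_l, e_v]
  set L : (Fin d → ℝ) × ℝ → ℝ := fun p => ∑ i, Vii i p with hL
  set G : (Fin d → ℝ) × ℝ → ℝ := fun p => ∑ i, Vi i p ^ 2 with hG
  have gL : GC T K L := GC.sum gVii
  have gG : GC T K G := GC.sum fun i => (gVi i).sq
  have sG : ContDiff ℝ (⊤ : ℕ∞) G := ContDiff.sum fun i _ => (sVi i).pow 2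
  set q : (Fin d → ℝ) × ℝ → ℝ := fun p =>
    (G p - s * l * exp (l * p.2) * V p ^ 2) * exp (2 * s * exp (l * p.2)) with hq
  have sq' : ContDiff ℝ (⊤ : ℕ∞) q := by
    apply ContDiff.mul
    · apply sG.sub
      apply ContDiff.mul (by fun_prop) (hV.pow 2)
    · fun_prop
  have gq : GC T K q :=
    (gG.sub (GC.mul_left (by fun_prop) gV.sq)).mul_right (by fun_prop)
  set N : (Fin d → ℝ) × ℝ → ℝ := fun p =>
    (-(2 * (Vt p + s * l * exp (l * p.2) * V p) * (L p + s * l * exp (l * p.2) * V p)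
      + s * l ^ 2 * exp (l * p.2) * V p ^ 2)) * exp (2 * s * exp (l * p.2)) with hN
  have cL := gL.1
  have cVt := gVt.1
  have cV := gV.1
  have gN : GC T K N := by
    refine ⟨by fun_prop, fun x t hx ht => ?_⟩
    simp [hN, gVt.2 x t hx ht, gV.2 x t hx ht]
  have gdq : GC T K (dd (0, 1) q) := dd_GC hT hK sq' gq _
  set Z1 : (Fin d → ℝ) × ℝ → ℝ := fun p => ∑ i, (Vi i p * dd (Pi.single i 1, 0) Vt p
      + dd (Pi.single i 1, 0) (Vi i) p * Vt p) with hZ1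
  set Z2 : (Fin d → ℝ) × ℝ → ℝ := fun p => ∑ i, (Vi i p * dd (Pi.single i 1, 0) V p
      + dd (Pi.single i 1, 0) (Vi i) p * V p) with hZ2
  have gZ1 : GC T K Z1 := GC.sum fun i =>
    ((gVi i).mul_right (dd_GC hT hK sVt gVt _).1).add ((gVii i).mul_right cVt)
  have gZ2 : GC T K Z2 := GC.sum fun i =>
    ((gVi i).mul_right (gVi i).1).add ((gVii i).mul_right cV)
  have iZ1 : ∀ t ∈ Set.Icc (0:ℝ) T, ∫ x, Z1 (x, t) = 0 := fun t ht =>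
    zero_sum hT hK sVi sVt gVi gVt ht
  have iZ2 : ∀ t ∈ Set.Icc (0:ℝ) T, ∫ x, Z2 (x, t) = 0 := fun t ht =>
    zero_sum hT hK sVi hV gVi gV ht
  have eZ2 : ∀ p, Z2 p = G p + V p * L p := by
    intro p
    simp only [hZ2, hG, hL, Finset.sum_add_distrib, ← Finset.sum_mul]
    rw [mul_comm (V p)]
    congr 1
    exact Finset.sum_congr rfl fun i _ => by rw [_root_.sq]
  have eZ1 : ∀ p, Z1 p = ∑ i, Vi i p * dd (0, 1) (Vi i) p + L p * Vt p := by
    intro p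
    simp only [hZ1, hL, Finset.sum_add_distrib, ← Finset.sum_mul]
    congr 1
    exact Finset.sum_congr rfl fun i _ => by rw [hVt, dd_comm hV]
  have hdq : ∀ x t, dd (0, 1) q (x, t) = N (x, t)
      + 2 * exp (2 * s * exp (l * t)) * Z1 (x, t)
      + 2 * s * l * exp (l * t) * exp (2 * s * exp (l * t)) * Z2 (x, t) := by
    intro x t
    have d0 := hasDerivAt_t hV x t
    have dG : HasDerivAt (fun r => G (x, r))
        (∑ i, 2 * Vi i (x, t) * dd (0, 1) (Vi i) (x, t)) t := by
      have := HasDerivAt.fun_sum (u := Finset.univ)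
        fun i (_ : i ∈ Finset.univ) => (hasDerivAt_t (sVi i) x t).pow 2
      simpa [hG] using this
    have dφ : HasDerivAt (fun r => exp (l * r)) (exp (l * t) * l) t := by
      simpa using ((hasDerivAt_id t).const_mul l).exp
    have dE := (dφ.const_mul (2 * s)).exp
    have dq := (dG.sub ((dφ.const_mul (s * l)).mul (d0.pow 2))).mul dE
    have := (hasDerivAt_t sq' x t).unique dq
    rw [this, eZ1, eZ2]
    have e5 : ∑ i, 2 * Vi i (x, t) * dd (0, 1) (Vi i) (x, t)
        = 2 * ∑ i, Vi i (x, t) * dd (0, 1) (Vi i) (x, t) := by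
      rw [Finset.mul_sum]; exact Finset.sum_congr rfl fun i _ => by ring
    rw [e5]
    simp only [hN, ← hVt, Pi.sub_apply, Pi.mul_apply, Pi.pow_apply]
    push_cast
    ring
  have hIN : ∫ t in Set.Ioo (0:ℝ) T, ∫ x, dd (0, 1) q (x, t)
      = ∫ t in Set.Ioo (0:ℝ) T, ∫ x, N (x, t) := by
    refine setIntegral_congr_fun measurableSet_Ioo fun t ht => ?_
    have ht' := Set.Ioo_subset_Icc_self ht
    simp only [hdq]
    have i12 : Integrable fun x : Fin d → ℝ =>
        N (x, t) + 2 * exp (2 * s * exp (l * t)) * Z1 (x, t) :=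
      (gN.intX hK ht').add ((gZ1.intX hK ht').const_mul _)
    rw [integral_add i12
      ((gZ2.intX hK ht').const_mul _),
      integral_add (gN.intX hK ht') ((gZ1.intX hK ht').const_mul _),
      integral_const_mul, integral_const_mul, iZ1 t ht', iZ2 t ht']
    ring
  have hftc := ftc hT hK sq' gq
  rw [hIN] at hftc
  -- boundary inequality
  have h0 : (0:ℝ) ∈ Set.Icc (0:ℝ) T := ⟨le_rfl, hT.le⟩
  have h1 : T ∈ Set.Icc (0:ℝ) T := ⟨hT.le, le_rfl⟩
  have ilb : Integrable fun x : Fin d → ℝ => s * l * V (x, 0) ^ 2 * exp (2 * s)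
      + G (x, T) * exp (2 * s * exp (l * T)) :=
    (((gV.sq.intX hK h0).const_mul _).mul_const _).add ((gG.intX hK h1).mul_const _)
  have irb : Integrable fun x : Fin d → ℝ =>
      s * l * exp (l * T) * V (x, T) ^ 2 * exp (2 * s * exp (l * T))
      + G (x, 0) * exp (2 * s) :=
    (((gV.sq.intX hK h1).const_mul _).mul_const _).add ((gG.intX hK h0).mul_const _)
  have hbd : (∫ x : Fin d → ℝ, (s * l * V (x, 0) ^ 2 * exp (2 * s)
      + G (x, T) * exp (2 * s * exp (l * T))))
      - (∫ x : Fin d → ℝ, (s * l * exp (l * T) * V (x, T) ^ 2 * exp (2 * s * exp (l * T))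
      + G (x, 0) * exp (2 * s))) = ∫ t in Set.Ioo (0:ℝ) T, ∫ x, N (x, t) := by
    rw [← hftc, ← integral_sub ilb irb]
    refine integral_congr_ae (Filter.Eventually.of_forall fun x => ?_)
    simp only [hq, mul_zero, exp_zero, mul_one]
    ring
  have hnn : 0 ≤ ∫ x : Fin d → ℝ, (s * l * V (x, 0) ^ 2 * exp (2 * s)
      + G (x, T) * exp (2 * s * exp (l * T))) := by
    refine integral_nonneg fun x => ?_
    have : 0 ≤ G (x, T) := Finset.sum_nonneg fun i _ => sq_nonneg _
    have hs0 : 0 ≤ s := by linarith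
    have hl0 : 0 ≤ l := by linarith
    simp only [Pi.zero_apply]
    positivity
  -- interior inequality
  set F : (Fin d → ℝ) × ℝ → ℝ := fun p => (Vt p - L p) ^ 2 * exp (2 * s * exp (l * p.2)) with hF
  have gF : GC T K F := (gVt.sub gL).sq.mul_right (by fun_prop)
  set M : (Fin d → ℝ) × ℝ → ℝ := fun p =>
    ((1 / (s * exp (l * p.2))) * (Vt p ^ 2 + L p ^ 2) + l * G p
      + s * l ^ 2 * exp (l * p.2) * V p ^ 2) * exp (2 * s * exp (l * p.2)) with hM
  have gM : GC T K M := by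
    refine GC.mul_right (GC.add (GC.add (GC.mul_left ?_ (gVt.sq.add gL.sq))
      (GC.mul_left continuous_const gG)) (GC.mul_left (by fun_prop) gV.sq)) (by fun_prop)
    refine Continuous.div continuous_const (by fun_prop) fun p => ?_
    have : 0 < s := by linarith
    positivity
  have hint : (∫ t in Set.Ioo (0:ℝ) T, ∫ x, M (x, t)) ≤
      ∫ t in Set.Ioo (0:ℝ) T, (7 * (∫ x, F (x, t)) - 7 * ∫ x, N (x, t)) := by
    refine setIntegral_mono_on (gM.intT hK)
      (((gF.intT hK).const_mul _).sub ((gN.intT hK).const_mul _)) measurableSet_Ioo ?_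
    intro t ht
    have ht' := Set.Ioo_subset_Icc_self ht
    have iF := (gF.intX hK ht').const_mul 7
    have iN := (gN.intX hK ht').const_mul 7
    have iZ := (gZ2.intX hK ht').const_mul (l * exp (2 * s * exp (l * t)))
    have hle : ∫ x, M (x, t) ≤ ∫ x, (7 * F (x, t) - 7 * N (x, t)
        + l * exp (2 * s * exp (l * t)) * Z2 (x, t)) := by
      refine integral_mono (gM.intX hK ht') ((iF.sub iN).add iZ) fun x => ?_
      simp only [eZ2]
      exact alg s l (exp (l * t)) _ (Vt (x, t)) (L (x, t)) (V (x, t)) (G (x, t)) hs hl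
        (one_le_exp (mul_nonneg (by linarith) ht.1.le)) (exp_pos _)
    have iFN : Integrable fun x : Fin d → ℝ => 7 * F (x, t) - 7 * N (x, t) := iF.sub iN
    rw [integral_add iFN iZ, integral_sub iF iN, integral_const_mul,
      integral_const_mul, integral_const_mul, iZ2 t ht'] at hle
    linarith
  rw [integral_sub ((gF.intT hK).const_mul _) ((gN.intT hK).const_mul _),
    integral_const_mul, integral_const_mul] at hint
  have hint' := hint
  simp only [hM, hF] at hint'
  linarith
end

section
/- There exist constants C > 0 and s₁ ≥ 1, depending only on d and T, such that for all s ≥ s₁, λ ≥ s₁ and every admissible function u: ∫_Q { (1/(sφ))(|∂_t u|² + |Δu|²) + λ|∇u|² + sλ²φ|u|² } e^{2sφ} dx dt + ∫_{ℝ^d} ( sλ|u(x,0)|² + |∇u(x,0)|² ) e^{2s} dx ≤ C ∫_Q |∂_t u + Δ u|² e^{2sφ} dx dt + C ∫_{ℝ^d} ( sλφ(T)|u(x,T)|² + |∇u(x,T)|² ) e^{2sφ(T)} dx. -/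
open MeasureTheory Real Set

noncomputable section

/-- Directional derivative on space-time. -/
def dirD {d : ℕ} (v : (Fin d → ℝ) × ℝ) (f : (Fin d → ℝ) × ℝ → ℝ) (p : (Fin d → ℝ) × ℝ) : ℝ :=
  fderiv ℝ f p v

theorem dirD_smooth {d : ℕ} (v : (Fin d → ℝ) × ℝ) {f : (Fin d → ℝ) × ℝ → ℝ}
    (hf : ContDiff ℝ (⊤ : ℕ∞) f) : ContDiff ℝ (⊤ : ℕ∞) (dirD v f) := by
  have h : ContDiff ℝ (⊤ : ℕ∞) (fderiv ℝ f) := hf.fderiv_right (by simp)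
  exact h.clm_apply contDiff_const

theorem dirD_comm {d : ℕ} (v w : (Fin d → ℝ) × ℝ) {f : (Fin d → ℝ) × ℝ → ℝ}
    (hf : ContDiff ℝ (⊤ : ℕ∞) f) (p : (Fin d → ℝ) × ℝ) :
    dirD v (dirD w f) p = dirD w (dirD v f) p := by
  have h : ContDiff ℝ (⊤ : ℕ∞) (fderiv ℝ f) := hf.fderiv_right (by simp)
  have hd : DifferentiableAt ℝ (fderiv ℝ f) p := (h.differentiable (by simp)) p
  have key : ∀ a b : (Fin d → ℝ) × ℝ, dirD a (dirD b f) p = fderiv ℝ (fderiv ℝ f) p a b := by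
    intro a b
    have := (hd.hasFDerivAt.clm_apply (hasFDerivAt_const b p)).fderiv
    change fderiv ℝ (fun q => fderiv ℝ f q b) p a = _
    rw [this]
    simp
  rw [key, key]
  exact (hf.contDiffAt.isSymmSndFDerivAt (by
    simp only [minSmoothness_of_isRCLikeNormedField]
    exact WithTop.coe_le_coe.2 le_top)) v w

theorem dirD_zero {d : ℕ} (v : (Fin d → ℝ) × ℝ) {f : (Fin d → ℝ) × ℝ → ℝ}
    {O : Set ((Fin d → ℝ) × ℝ)} (hO : IsOpen O) (h : ∀ p ∈ O, f p = 0) :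
    ∀ p ∈ O, dirD v f p = 0 := by
  intro p hp
  have : f =ᶠ[nhds p] fun _ => 0 := by
    filter_upwards [hO.mem_nhds hp] with q hq using h q hq
  rw [dirD, this.fderiv_eq]
  simp

theorem dirD_hasDerivAt {d : ℕ} {f : (Fin d → ℝ) × ℝ → ℝ} (hf : ContDiff ℝ (⊤ : ℕ∞) f)
    (x : Fin d → ℝ) (t : ℝ) :
    HasDerivAt (fun τ => f (x, τ)) (dirD (0, 1) f (x, t)) t := by
  have hd : DifferentiableAt ℝ f (x, t) := (hf.differentiable (by simp)) _
  have h2 : HasDerivAt (fun τ : ℝ => (x, τ)) ((0 : Fin d → ℝ), (1 : ℝ)) t :=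
    (hasDerivAt_const t x).prodMk (hasDerivAt_id t)
  exact hd.hasFDerivAt.comp_hasDerivAt t h2

theorem dirD_space {d : ℕ} {f : (Fin d → ℝ) × ℝ → ℝ} (hf : ContDiff ℝ (⊤ : ℕ∞) f)
    (i : Fin d) (x : Fin d → ℝ) (t : ℝ) :
    spd i (fun y => f (y, t)) x = dirD (Pi.single i 1, 0) f (x, t) := by
  have hd : DifferentiableAt ℝ f (x, t) := (hf.differentiable (by simp)) _
  have h2 : HasFDerivAt (fun y : Fin d → ℝ => (y, t))
      ((ContinuousLinearMap.id ℝ (Fin d → ℝ)).prod 0) x :=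
    (hasFDerivAt_id x).prodMk (hasFDerivAt_const t x)
  have h3 := (hd.hasFDerivAt.comp x h2).fderiv
  change fderiv ℝ (f ∘ fun y => (y, t)) x _ = _
  rw [h3]
  simp [dirD]

theorem integrable_of_zero {d : ℕ} {K : Set (Fin d → ℝ)} (hK : IsCompact K)
    {f : (Fin d → ℝ) → ℝ} (hf : Continuous f) (h0 : ∀ x, x ∉ K → f x = 0) : Integrable f :=
  hf.integrable_of_hasCompactSupport (HasCompactSupport.intro hK h0)

/-- Integration by parts on a time slice. -/
theorem slice_ibp {d : ℕ} {K : Set (Fin d → ℝ)} (hK : IsCompact K) (i : Fin d)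
    {f g : (Fin d → ℝ) → ℝ} (hf : ContDiff ℝ (⊤ : ℕ∞) f) (hg : ContDiff ℝ (⊤ : ℕ∞) g)
    (h0 : ∀ x, x ∉ K → f x = 0) (h1 : ∀ x, x ∉ K → g x = 0) :
    ∫ x in K, (spd i f x * g x + f x * spd i g x) = 0 := by
  have cf : Continuous (spd i f) :=
    (hf.continuous_fderiv (by simp)).clm_apply continuous_const
  have cg : Continuous (spd i g) :=
    (hg.continuous_fderiv (by simp)).clm_apply continuous_const
  have i1 : Integrable (fun x => spd i f x * g x) :=
    integrable_of_zero hK (cf.mul hg.continuous) (fun x hx => by simp [h1 x hx])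
  have i2 : Integrable (fun x => f x * spd i g x) :=
    integrable_of_zero hK (hf.continuous.mul cg) (fun x hx => by simp [h0 x hx])
  have i3 : Integrable (fun x => f x * g x) :=
    integrable_of_zero hK (hf.continuous.mul hg.continuous) (fun x hx => by simp [h0 x hx])
  have := integral_mul_fderiv_eq_neg_fderiv_mul_of_integrable (μ := volume) i1 i2 i3
    (fun x _ => hf.differentiable (by simp) x) (fun x _ => hg.differentiable (by simp) x)
  rw [setIntegral_eq_integral_of_forall_compl_eq_zero
    (fun x hx => by simp [h0 x hx, h1 x hx]), integral_add i1 i2]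
  change (∫ x, f x * spd i g x) = - ∫ x, spd i f x * g x at this
  rw [this]; ring

theorem abstract_int {d : ℕ} {K : Set (Fin d → ℝ)} (hK : IsCompact K) {T : ℝ} (hT : 0 < T)
    (L R N N' : (Fin d → ℝ) × ℝ → ℝ) (hL : Continuous L) (hR : Continuous R)
    (hN : Continuous N) (hN' : Continuous N')
    (hder : ∀ x t, HasDerivAt (fun τ => N (x, τ)) (N' (x, t)) t)
    (hle : ∀ t ∈ Ioo 0 T, ∫ x in K, L (x, t) ≤ 6 * (∫ x in K, R (x, t)) + 6 * ∫ x in K, N' (x, t)) :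
    ∫ t in Ioo 0 T, ∫ x in K, L (x, t) ≤ 6 * (∫ t in Ioo 0 T, ∫ x in K, R (x, t))
      + 6 * ((∫ x in K, N (x, T)) - ∫ x in K, N (x, 0)) := by
  have par : ∀ F : (Fin d → ℝ) × ℝ → ℝ, Continuous F →
      IntegrableOn (fun t => ∫ x in K, F (x, t)) (Ioo 0 T) := by
    intro F hF
    have : Continuous (fun t => ∫ x in K, F (x, t)) :=
      continuous_parametric_integral_of_continuous (f := fun t x => F (x, t))
        (hF.comp continuous_swap) hK
    exact (this.continuousOn.integrableOn_compact (isCompact_Icc (a := 0) (b := T))).mono_set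
      Ioo_subset_Icc_self
  have sl : ∀ F : (Fin d → ℝ) × ℝ → ℝ, Continuous F → ∀ t,
      IntegrableOn (fun x => F (x, t)) K := by
    intro F hF t
    exact (by fun_prop : Continuous fun x => F (x, t)).continuousOn.integrableOn_compact hK
  have key : ∫ t in Ioo 0 T, ∫ x in K, N' (x, t) = (∫ x in K, N (x, T)) - ∫ x in K, N (x, 0) := by
    rw [integral_integral_swap (f := fun t x => N' (x, t))]
    · rw [← integral_sub (sl N hN T) (sl N hN 0)]
      congr 1
      ext x
      rw [← integral_Ioc_eq_integral_Ioo, ← intervalIntegral.integral_of_le hT.le]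
      exact intervalIntegral.integral_eq_sub_of_hasDerivAt (fun t _ => hder x t)
        ((by fun_prop : Continuous fun t => N' (x, t)).intervalIntegrable _ _)
    · rw [Measure.prod_restrict]
      have c : Continuous (Function.uncurry fun t x => N' (x, t)) := hN'.comp continuous_swap
      exact (c.continuousOn.integrableOn_compact ((isCompact_Icc (a := 0) (b := T)).prod hK)).mono_set
        (prod_mono Ioo_subset_Icc_self le_rfl)
  rw [← key, ← integral_const_mul, ← integral_const_mul,
    ← integral_add ((par R hR).const_mul 6) ((par N' hN').const_mul 6)]
  exact setIntegral_mono_on (par L hL) (((par R hR).const_mul 6).add ((par N' hN').const_mul 6))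
    measurableSet_Ioo hle

theorem pointwise_ineq (s lam ph ut q u g m e : ℝ) (hs : 1 ≤ s) (hl : 1 ≤ lam) (hp : 1 ≤ ph)
    (he : 0 < e) :
    ((1 / (s * ph)) * (ut ^ 2 + q ^ 2) + lam * g + s * lam ^ 2 * ph * u ^ 2) * e
    ≤ 6 * ((ut + q) ^ 2 * e)
      + 6 * ((2 * m + lam * (s * lam * ph) * u ^ 2 + 2 * (s * lam * ph) * u * ut) * e
        + (g + s * lam * ph * u ^ 2) * (2 * (s * lam * ph) * e))
      + ((-12 * m + (lam - 12 * (s * lam * ph)) * g)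
        + (-12 * ut + (lam - 12 * (s * lam * ph)) * u) * q) * e := by
  have hsp : 1 ≤ s * ph := by nlinarith
  obtain ⟨k, hk⟩ : ∃ k, k = 1 / (s * ph) := ⟨_, rfl⟩
  obtain ⟨a, ha⟩ : ∃ a, a = s * lam * ph := ⟨_, rfl⟩
  have hk0 : 0 ≤ k := by rw [hk]; positivity
  have hk1 : k ≤ 1 := by rw [hk]; exact (div_le_one (by linarith)).2 hsp
  have hka : k * a = lam := by rw [hk, ha]; field_simp
  have hal : lam ≤ a := by rw [ha]; nlinarith
  have h1 : s * lam ^ 2 * ph = lam * a := by rw [ha]; ring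
  rw [h1, ← hk, ← ha]
  have hP : k * ut ^ 2 ≤ 2 * (ut + a * u) ^ 2 + 2 * (lam * a * u ^ 2) := by
    have e1 : k * ut ^ 2 ≤ k * (2 * (ut + a * u) ^ 2 + 2 * (a * u) ^ 2) := by
      apply mul_le_mul_of_nonneg_left _ hk0
      nlinarith [sq_nonneg (ut + 2 * (a * u))]
    have e2 : k * (a * u) ^ 2 = lam * a * u ^ 2 := by rw [← hka]; ring
    nlinarith [mul_le_mul_of_nonneg_right hk1 (sq_nonneg (ut + a * u))]
  have hS : k * q ^ 2 ≤ 2 * (q - a * u) ^ 2 + 2 * (lam * a * u ^ 2) := by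
    have e1 : k * q ^ 2 ≤ k * (2 * (q - a * u) ^ 2 + 2 * (a * u) ^ 2) := by
      apply mul_le_mul_of_nonneg_left _ hk0
      nlinarith [sq_nonneg (q - 2 * (a * u))]
    have e2 : k * (a * u) ^ 2 = lam * a * u ^ 2 := by rw [← hka]; ring
    nlinarith [mul_le_mul_of_nonneg_right hk1 (sq_nonneg (q - a * u))]
  have hU : lam ^ 2 * u ^ 2 ≤ lam * a * u ^ 2 := by
    apply mul_le_mul_of_nonneg_right _ (sq_nonneg u)
    nlinarith
  have hX : 0 ≤ (q - a * u) ^ 2 + lam ^ 2 * u ^ 2 + lam * u * (q - a * u) := by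
    nlinarith [sq_nonneg ((q - a * u) + lam * u / 2), sq_nonneg (lam * u)]
  have hu0 : 0 ≤ lam ^ 2 * u ^ 2 := by positivity
  have main : k * (ut ^ 2 + q ^ 2) + lam * g + lam * a * u ^ 2 ≤
      6 * (ut + q) ^ 2 + 6 * ((2 * m + lam * a * u ^ 2 + 2 * a * u * ut)
        + (g + a * u ^ 2) * (2 * a)) + ((-12 * m + (lam - 12 * a) * g)
        + (-12 * ut + (lam - 12 * a) * u) * q) := by
    nlinarith [sq_nonneg (ut + a * u), sq_nonneg (q - a * u)]
  have := mul_le_mul_of_nonneg_right main he.le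
  calc _ ≤ _ := this
    _ = _ := by ring

end

/-- Carleman estimate (4.4) with two large parameters for the backward heat
operator `∂_t + Δ`, with weight `φ(t) = e^{λt}`. -/
theorem carleman_backward_heat
    (d : ℕ) (hd : 1 ≤ d) (T : ℝ) (hT : 0 < T) :
    ∃ C > (0:ℝ), ∃ s₁ ≥ (1:ℝ), ∀ s ≥ s₁, ∀ lam ≥ s₁,
      ∀ u : (Fin d → ℝ) → ℝ → ℝ, Admissible T u →
      (∫ t in Set.Ioo (0:ℝ) T, ∫ x : Fin d → ℝ,
          ((1 / (s * Real.exp (lam * t))) * ((tder u x t) ^ 2 + (lap u x t) ^ 2)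
            + lam * grad2 u x t
            + s * lam ^ 2 * Real.exp (lam * t) * (u x t) ^ 2)
          * Real.exp (2 * s * Real.exp (lam * t)))
      + (∫ x : Fin d → ℝ,
          (s * lam * (u x 0) ^ 2 + grad2 u x 0) * Real.exp (2 * s))
      ≤ C * (∫ t in Set.Ioo (0:ℝ) T, ∫ x : Fin d → ℝ,
            (tder u x t + lap u x t) ^ 2 * Real.exp (2 * s * Real.exp (lam * t)))
        + C * (∫ x : Fin d → ℝ,
            (s * lam * Real.exp (lam * T) * (u x T) ^ 2 + grad2 u x T)
              * Real.exp (2 * s * Real.exp (lam * T))) := by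
  refine ⟨6, by norm_num, 1, le_rfl, ?_⟩
  intro s hs lam hl u hu
  obtain ⟨hsm, K, hK, h0⟩ := hu
  obtain ⟨U, hU⟩ : ∃ U : (Fin d → ℝ) × ℝ → ℝ, U = fun p => u p.1 p.2 := ⟨_, rfl⟩
  rw [← hU] at hsm
  have eu : ∀ x t, u x t = U (x, t) := fun x t => by rw [hU]
  have esp : ∀ i x t, spd i (fun y => u y t) x = dirD (Pi.single i 1, 0) U (x, t) := by
    intro i x t
    simp only [eu]
    exact dirD_space hsm i x t
  have et : ∀ x t, tder u x t = dirD (0, 1) U (x, t) := by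
    intro x t
    unfold tder
    rw [← (dirD_hasDerivAt hsm x t).deriv]
    congr 1
    ext τ
    exact eu x τ
  have el : ∀ x t, lap u x t =
      ∑ i, dirD (Pi.single i 1, 0) (dirD (Pi.single i 1, 0) U) (x, t) := by
    intro x t
    unfold lap pdij
    refine Finset.sum_congr rfl fun i _ => ?_
    simp only [esp]
    exact dirD_space (dirD_smooth _ hsm) i x t
  have eg : ∀ x t, grad2 u x t = ∑ i, (dirD (Pi.single i 1, 0) U (x, t)) ^ 2 := by
    intro x t
    unfold grad2
    simp only [esp]
  -- vanishing
  have hO : IsOpen (Kᶜ ×ˢ Ioo 0 T : Set ((Fin d → ℝ) × ℝ)) :=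
    hK.isClosed.isOpen_compl.prod isOpen_Ioo
  have z0 : ∀ p ∈ (Kᶜ ×ˢ Ioo 0 T : Set ((Fin d → ℝ) × ℝ)), U p = 0 := by
    rintro ⟨x, t⟩ ⟨hx, ht⟩
    rw [← eu]
    exact h0 x t hx (Ioo_subset_Icc_self ht)
  have zi := fun i : Fin d => dirD_zero (Pi.single i 1, 0) hO z0
  have zt := dirD_zero (0, 1) hO z0
  have zii := fun i : Fin d => dirD_zero (Pi.single i 1, 0) hO (zi i)
  have zg : ∀ x t, x ∉ K → t ∈ Icc 0 T → grad2 u x t = 0 := by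
    intro x t hx ht
    unfold grad2 spd
    refine Finset.sum_eq_zero fun i _ => ?_
    have : (fun y => u y t) =ᶠ[nhds x] fun _ => 0 := by
      filter_upwards [hK.isClosed.isOpen_compl.mem_nhds hx] with y hy using h0 y t hy ht
    rw [this.fderiv_eq]
    simp
  have ci := fun i : Fin d => (dirD_smooth (Pi.single i 1, 0) hsm).continuous
  have ct := (dirD_smooth (0, 1) hsm).continuous
  have cii := fun i : Fin d =>
    (dirD_smooth (Pi.single i 1, 0) (dirD_smooth (Pi.single i 1, 0) hsm)).continuous
  have cit := fun i : Fin d =>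
    (dirD_smooth (0, 1) (dirD_smooth (Pi.single i 1, 0) hsm)).continuous
  have cU := hsm.continuous
  -- the four space-time functions
  let q : (Fin d → ℝ) × ℝ → ℝ :=
    fun p => ∑ i, dirD (Pi.single i 1, 0) (dirD (Pi.single i 1, 0) U) p
  let g : (Fin d → ℝ) × ℝ → ℝ := fun p => ∑ i, (dirD (Pi.single i 1, 0) U p) ^ 2
  let m : (Fin d → ℝ) × ℝ → ℝ :=
    fun p => ∑ i, dirD (Pi.single i 1, 0) U p * dirD (0, 1) (dirD (Pi.single i 1, 0) U) p
  have cq : Continuous q := continuous_finsetSum _ fun i _ => cii i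
  have cg : Continuous g := continuous_finsetSum _ fun i _ => (ci i).pow 2
  have cm : Continuous m := continuous_finsetSum _ fun i _ => (ci i).mul (cit i)
  let L : (Fin d → ℝ) × ℝ → ℝ := fun p =>
    ((1 / (s * Real.exp (lam * p.2))) * ((dirD (0, 1) U p) ^ 2 + (q p) ^ 2)
            + lam * g p + s * lam ^ 2 * Real.exp (lam * p.2) * (U p) ^ 2)
          * Real.exp (2 * s * Real.exp (lam * p.2))
  let R : (Fin d → ℝ) × ℝ → ℝ := fun p =>
    (dirD (0, 1) U p + q p) ^ 2 * Real.exp (2 * s * Real.exp (lam * p.2))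
  let N : (Fin d → ℝ) × ℝ → ℝ := fun p =>
    (g p + s * lam * Real.exp (lam * p.2) * (U p) ^ 2) * Real.exp (2 * s * Real.exp (lam * p.2))
  let N' : (Fin d → ℝ) × ℝ → ℝ := fun p =>
    (2 * m p + lam * (s * lam * Real.exp (lam * p.2)) * (U p) ^ 2
        + 2 * (s * lam * Real.exp (lam * p.2)) * U p * dirD (0, 1) U p)
          * Real.exp (2 * s * Real.exp (lam * p.2))
        + (g p + s * lam * Real.exp (lam * p.2) * (U p) ^ 2)
          * (2 * (s * lam * Real.exp (lam * p.2)) * Real.exp (2 * s * Real.exp (lam * p.2)))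
  have cL : Continuous L := by
    have hne : ∀ p : (Fin d → ℝ) × ℝ, s * Real.exp (lam * p.2) ≠ 0 := fun p => by positivity
    have : Continuous fun p : (Fin d → ℝ) × ℝ => 1 / (s * Real.exp (lam * p.2)) :=
      continuous_const.div (by fun_prop) hne
    fun_prop
  have cR : Continuous R := by fun_prop
  have cN : Continuous N := by fun_prop
  have cN' : Continuous N' := by fun_prop
  have hder : ∀ x t, HasDerivAt (fun τ => N (x, τ)) (N' (x, t)) t := by
    intro x t
    have hgd : HasDerivAt (fun τ => g (x, τ)) (2 * m (x, t)) t := by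
      have := HasDerivAt.fun_sum (u := Finset.univ) (fun (i : Fin d) _ =>
        (dirD_hasDerivAt (dirD_smooth (Pi.single i 1, 0) hsm) x t).pow 2)
      refine this.congr_deriv ?_
      simp only [m, Finset.mul_sum]
      refine Finset.sum_congr rfl fun i _ => ?_
      norm_num
      ring
    have hφ : HasDerivAt (fun τ => Real.exp (lam * τ)) (lam * Real.exp (lam * t)) t := by
      have := ((hasDerivAt_id t).const_mul lam).exp
      refine this.congr_deriv ?_
      simp; ring
    have he := (hφ.const_mul (2 * s)).exp
    have hu2 := (dirD_hasDerivAt hsm x t).pow 2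
    refine ((hgd.add ((hφ.const_mul (s * lam)).mul hu2)).mul he).congr_deriv ?_
    simp only [N', Pi.add_apply, Pi.mul_apply, Pi.pow_apply]
    norm_num
    ring
  -- the divergence term
  have hle : ∀ t ∈ Ioo 0 T, ∫ x in K, L (x, t) ≤
      6 * (∫ x in K, R (x, t)) + 6 * ∫ x in K, N' (x, t) := by
    intro t ht
    have sl : ∀ F : (Fin d → ℝ) × ℝ → ℝ, Continuous F →
        IntegrableOn (fun x => F (x, t)) K := by
      intro F hF
      exact (by fun_prop : Continuous fun x => F (x, t)).continuousOn.integrableOn_compact hK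
    obtain ⟨a, ha⟩ : ∃ a, a = s * lam * Real.exp (lam * t) := ⟨_, rfl⟩
    let h : (Fin d → ℝ) × ℝ → ℝ := fun p => -12 * dirD (0, 1) U p + (lam - 12 * a) * U p
    have hh : ContDiff ℝ (⊤ : ℕ∞) h :=
      (contDiff_const.mul (dirD_smooth _ hsm)).add (contDiff_const.mul hsm)
    have hsl : ContDiff ℝ (⊤ : ℕ∞) (fun x : Fin d → ℝ => (x, t)) :=
      contDiff_id.prodMk contDiff_const
    have dh : ∀ (i : Fin d) p, dirD (Pi.single i 1, 0) h p =
        -12 * dirD (0, 1) (dirD (Pi.single i 1, 0) U) p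
          + (lam - 12 * a) * dirD (Pi.single i 1, 0) U p := by
      intro i p
      rw [dirD_comm (0, 1) _ hsm]
      have d1 : DifferentiableAt ℝ (dirD (0, 1) U) p :=
        (dirD_smooth _ hsm).differentiable (by simp) p
      have d2 : DifferentiableAt ℝ U p := hsm.differentiable (by simp) p
      have := ((d1.hasFDerivAt.const_mul (-12)).add (d2.hasFDerivAt.const_mul (lam - 12 * a))).fderiv
      change fderiv ℝ h p _ = _
      erw [this]
      simp [dirD]
    let Z : (Fin d → ℝ) × ℝ → ℝ := fun p => ∑ i : Fin d,
      (dirD (Pi.single i 1, 0) h p * dirD (Pi.single i 1, 0) U p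
        + h p * dirD (Pi.single i 1, 0) (dirD (Pi.single i 1, 0) U) p)
    have cZi : ∀ i : Fin d, Continuous fun p =>
      (dirD (Pi.single i 1, 0) h p * dirD (Pi.single i 1, 0) U p
        + h p * dirD (Pi.single i 1, 0) (dirD (Pi.single i 1, 0) U) p) := fun i =>
      ((dirD_smooth _ hh).continuous.mul (ci i)).add (hh.continuous.mul (cii i))
    have cZ : Continuous Z := continuous_finsetSum _ fun i _ => cZi i
    have iZ : ∫ x in K, Z (x, t) = 0 := by
      simp only [Z]
      rw [integral_finsetSum _ (fun i _ => sl _ (cZi i))]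
      refine Finset.sum_eq_zero fun i _ => ?_
      have := slice_ibp hK i (hh.comp hsl) ((dirD_smooth (Pi.single i 1, 0) hsm).comp hsl)
        (fun x hx => by
          simp only [Function.comp, h]
          rw [zt (x, t) ⟨hx, ht⟩, z0 (x, t) ⟨hx, ht⟩]; ring)
        (fun x hx => zi i (x, t) ⟨hx, ht⟩)
      refine Eq.trans ?_ this
      congr 1
      ext x
      have e1 := dirD_space hh i x t
      have e2 := dirD_space (dirD_smooth (Pi.single i 1, 0) hsm) i x t
      rw [← e1, ← e2]
      rfl
    have zsum : ∀ x, Z (x, t) = (-12 * m (x, t) + (lam - 12 * a) * g (x, t))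
        + (-12 * dirD (0, 1) U (x, t) + (lam - 12 * a) * U (x, t)) * q (x, t) := by
      intro x
      simp only [Z, m, g, q, Finset.mul_sum, ← Finset.sum_add_distrib]
      refine Finset.sum_congr rfl fun i _ => ?_
      rw [dh]
      simp only [h]
      ring
    have mono : ∫ x in K, L (x, t) ≤ ∫ x in K, ((6 * R (x, t) + 6 * N' (x, t))
        + Z (x, t) * Real.exp (2 * s * Real.exp (lam * t))) := by
      refine setIntegral_mono_on (sl L cL) ((((sl R cR).const_mul 6).add
        ((sl N' cN').const_mul 6)).add ((sl Z cZ).mul_const _)) hK.measurableSet ?_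
      intro x _
      rw [zsum x, ha]
      exact pointwise_ineq s lam (Real.exp (lam * t)) _ _ _ _ _ _ hs hl
        (Real.one_le_exp (mul_nonneg (by linarith) ht.1.le)) (Real.exp_pos _)
    have iRN : IntegrableOn (fun x => 6 * R (x, t) + 6 * N' (x, t)) K :=
      ((sl R cR).const_mul 6).add ((sl N' cN').const_mul 6)
    rw [integral_add iRN
      ((sl Z cZ).mul_const _), integral_add ((sl R cR).const_mul 6) ((sl N' cN').const_mul 6),
      integral_mul_const, iZ, integral_const_mul, integral_const_mul] at mono
    linarith
  have fin := abstract_int hK hT L R N N' cL cR cN cN' hder hle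
  have zl : ∀ x t, x ∉ K → t ∈ Ioo 0 T → lap u x t = 0 := by
    intro x t hx ht
    rw [el]
    exact Finset.sum_eq_zero fun i _ => zii i (x, t) ⟨hx, ht⟩
  have ztd : ∀ x t, x ∉ K → t ∈ Ioo 0 T → tder u x t = 0 := by
    intro x t hx ht
    rw [et]
    exact zt (x, t) ⟨hx, ht⟩
  have tL : ∫ t in Ioo 0 T, ∫ x in K, L (x, t) = ∫ t in Set.Ioo (0:ℝ) T, ∫ x : Fin d → ℝ,
          ((1 / (s * Real.exp (lam * t))) * ((tder u x t) ^ 2 + (lap u x t) ^ 2)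
            + lam * grad2 u x t
            + s * lam ^ 2 * Real.exp (lam * t) * (u x t) ^ 2)
          * Real.exp (2 * s * Real.exp (lam * t)) := by
    refine setIntegral_congr_fun measurableSet_Ioo fun t ht => ?_
    have := setIntegral_eq_integral_of_forall_compl_eq_zero (μ := volume) (s := K)
      (f := fun x => ((1 / (s * Real.exp (lam * t))) * ((tder u x t) ^ 2 + (lap u x t) ^ 2)
            + lam * grad2 u x t
            + s * lam ^ 2 * Real.exp (lam * t) * (u x t) ^ 2)
          * Real.exp (2 * s * Real.exp (lam * t))) (fun x hx => by
        rw [zl x t hx ht, ztd x t hx ht, zg x t hx (Ioo_subset_Icc_self ht),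
          h0 x t hx (Ioo_subset_Icc_self ht)]
        ring)
    refine Eq.trans ?_ this
    simp only [L, q, g, et, el, eg, eu]
  have tR : ∫ t in Ioo 0 T, ∫ x in K, R (x, t) = ∫ t in Set.Ioo (0:ℝ) T, ∫ x : Fin d → ℝ,
            (tder u x t + lap u x t) ^ 2 * Real.exp (2 * s * Real.exp (lam * t)) := by
    refine setIntegral_congr_fun measurableSet_Ioo fun t ht => ?_
    have := setIntegral_eq_integral_of_forall_compl_eq_zero (μ := volume) (s := K)
      (f := fun x => (tder u x t + lap u x t) ^ 2 * Real.exp (2 * s * Real.exp (lam * t)))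
      (fun x hx => by
        rw [zl x t hx ht, ztd x t hx ht]
        ring)
    refine Eq.trans ?_ this
    simp only [R, q, et, el]
  have tN : ∀ t ∈ Icc 0 T, ∫ x in K, N (x, t) = ∫ x : Fin d → ℝ,
            (s * lam * Real.exp (lam * t) * (u x t) ^ 2 + grad2 u x t)
              * Real.exp (2 * s * Real.exp (lam * t)) := by
    intro t ht
    have := setIntegral_eq_integral_of_forall_compl_eq_zero (μ := volume) (s := K)
      (f := fun x => (s * lam * Real.exp (lam * t) * (u x t) ^ 2 + grad2 u x t)
              * Real.exp (2 * s * Real.exp (lam * t)))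
      (fun x hx => by
        rw [zg x t hx ht, h0 x t hx ht]
        ring)
    refine Eq.trans ?_ this
    simp only [N, g, eg, eu]
    congr 1
    ext x
    ring
  have n0 : 0 ≤ ∫ x in K, N (x, 0) := by
    refine integral_nonneg fun x => ?_
    have : 0 ≤ g (x, 0) := Finset.sum_nonneg fun i _ => sq_nonneg _
    simp only [N, Pi.zero_apply]
    positivity
  have t0 := tN 0 ⟨le_rfl, hT.le⟩
  simp only [mul_zero, Real.exp_zero, mul_one] at t0
  rw [tL, tR, tN T ⟨hT.le, le_rfl⟩] at fin
  rw [← t0]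
  linarith
end
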